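/- arXiv:0802.3149 — 7 statements merged into one kernel-verified Lean document; each statement's English description precedes it below -/
import Mathlib

section
/- Let d ≥ 7 and let A, B be binary forms of order 7 (homogeneous polynomials of degree 7 in x₁, x₂ over a field of characteristic zero). Writing 𝒞_q = (A,B)_q for the q-th transvectant of A and B, the identity 𝒞₁·𝒞₅ = −(21/2)·(𝒞₁,𝒞₁)₄ + (84/11)·(𝒞₁,𝒞₃)₂ + (735/484)·𝒞₃² holds. -/
open MvPolynomial Finset

/-- The `q`-th transvectant of two binary forms of orders `m` and `n`:
`(F,G)_q = ((m−q)!(n−q)!/(m!·n!)) · Σ_{i=0}^{q} (−1)^i C(q,i)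
  (∂^q F/∂x₁^{q−i}∂x₂^{i}) (∂^q G/∂x₁^{i}∂x₂^{q−i})`. -/
noncomputable def transvectant {k : Type*} [Field k] [CharZero k]
    (m n q : ℕ) (F G : MvPolynomial (Fin 2) k) : MvPolynomial (Fin 2) k :=
  C ((((m - q).factorial * (n - q).factorial : ℕ) : k) /
      ((m.factorial * n.factorial : ℕ) : k)) *
    ∑ i ∈ Finset.range (q + 1),
      C ((-1 : k) ^ i * (q.choose i : k)) *
        ((fun P => pderiv (0 : Fin 2) P)^[q - i] ((fun P => pderiv (1 : Fin 2) P)^[i] F)) *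
        ((fun P => pderiv (0 : Fin 2) P)^[i] ((fun P => pderiv (1 : Fin 2) P)^[q - i] G))

/-!
By Euler's identity, `x₁^q · (F, G)_q` is the bilinear expression `Σ (-1)^i C(q,i) F_i G_{q-i}` in
the suitably normalized `x₂`-derivatives `F_i`, `G_j` of the two forms. As `x₁` is a constant for
`∂/∂x₂`, this also makes the `x₂`-derivatives of `𝒞₁ = (A, B)₁` and `𝒞₃ = (A, B)₃`, up to powers of
`x₁`, linear combinations of the minors `p_ij = A_i B_j - A_j B_i`. Multiplied by `x₁^6`, the syzygy
thus becomes a quadratic relation between the `p_ij`, and it is a multiple of the Plücker relation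
`p₀₁ p₂₃ - p₀₂ p₁₃ + p₀₃ p₁₂ = 0`.
-/

theorem sum_antidiagonal_neg_one_pow_choose_succ {R : Type*} [CommRing R] (f : ℕ → ℕ → R)
    (q : ℕ) :
    ∑ ij ∈ antidiagonal (q + 1), (-1) ^ ij.1 * ((q + 1).choose ij.1 : R) * f ij.1 ij.2 =
      ∑ ij ∈ antidiagonal q, (-1) ^ ij.1 * (q.choose ij.1 : R) *
        (f ij.1 (ij.2 + 1) - f (ij.1 + 1) ij.2) := by
  have pascal := sum_antidiagonal_choose_succ_mul (fun i j => (-1) ^ i * f i j) q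
  simp only [← mul_assoc, mul_comm _ ((-1 : R) ^ _)] at pascal
  rw [pascal, ← sum_add_distrib]
  refine sum_congr rfl fun ij hij => ?_
  rw [← Nat.choose_symm_of_eq_add (mem_antidiagonal.mp hij).symm]
  ring

theorem natCast_sub_natCast_ne_zero {R : Type*} [AddGroupWithOne R] [CharZero R] {m n : ℕ}
    (h : m ≠ n) : (m : R) - n ≠ 0 :=
  sub_ne_zero.mpr (Nat.cast_injective.ne h)

theorem pderiv_comm {R σ : Type*} [CommRing R] (i j : σ) (F : MvPolynomial σ R) :
    pderiv i (pderiv j F) = pderiv j (pderiv i F) := by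
  classical
  have commutator_eq_zero : ⁅(pderiv i : Derivation R (MvPolynomial σ R) (MvPolynomial σ R)),
      (pderiv j : Derivation R (MvPolynomial σ R) (MvPolynomial σ R))⁆ = 0 :=
    derivation_ext fun l => by
      simp [Derivation.commutator_apply, pderiv_X, Pi.single_apply, apply_ite]
  simpa [Derivation.commutator_apply, sub_eq_zero] using congrArg (fun D => D F) commutator_eq_zero

theorem pderiv_ofNat {R σ : Type*} [CommSemiring R] (i : σ) (a : ℕ) [a.AtLeastTwo] :
    pderiv i (ofNat(a) : MvPolynomial σ R) = 0 := by
  rw [← Nat.cast_ofNat, Derivation.map_natCast]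

theorem isHomogeneous_iterate_pderiv {R σ : Type*} [CommSemiring R] {F : MvPolynomial σ R} {m : ℕ}
    (hF : F.IsHomogeneous m) (s : σ) (i : ℕ) : ((pderiv s)^[i] F).IsHomogeneous (m - i) := by
  induction i with
  | zero => exact hF
  | succ i ih =>
    rw [Function.iterate_succ_apply', ← Nat.sub_sub]
    exact ih.pderiv

theorem iterate_pderiv_pderiv {R σ : Type*} [CommRing R] (s t : σ) (i : ℕ) (F : MvPolynomial σ R) :
    (pderiv s)^[i] (pderiv t F) = pderiv t ((pderiv s)^[i] F) :=
  Function.Commute.iterate_left (f := pderiv s) (g := pderiv t) (pderiv_comm s t) i F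

section

variable {k : Type*} [Field k]

local notation "x₁" => (X 0 : MvPolynomial (Fin 2) k)

/-- The `i`-th `x₂`-derivative of a binary form `F` of order `m`, with the normalizing factor
`(m - i)! / m!` that occurs in the transvectants. -/
noncomputable def jetCoeff (m : ℕ) (F : MvPolynomial (Fin 2) k) (i : ℕ) : MvPolynomial (Fin 2) k :=
  C (((m - i).factorial : k) / (m.factorial : k)) * (pderiv 1)^[i] F

/-- The `2 × 2` minor on columns `i` and `j` of the matrix whose two rows are the normalized
`x₂`-derivatives of two binary forms `A` and `B` of order `n`. -/
noncomputable def jetMinor (n : ℕ) (A B : MvPolynomial (Fin 2) k) (i j : ℕ) :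
    MvPolynomial (Fin 2) k :=
  jetCoeff n A i * jetCoeff n B j - jetCoeff n A j * jetCoeff n B i

variable {n : ℕ} {A B : MvPolynomial (Fin 2) k}

theorem jetMinor_self (i : ℕ) : jetMinor n A B i i = 0 := by
  rw [jetMinor, sub_self]

theorem jetMinor_pluecker (i j l r : ℕ) :
    jetMinor n A B i j * jetMinor n A B l r - jetMinor n A B i l * jetMinor n A B j r
      + jetMinor n A B i r * jetMinor n A B j l = 0 := by
  simp only [jetMinor]
  ring

theorem pderiv_one_jetCoeff {m i : ℕ} (hi : i < m) (F : MvPolynomial (Fin 2) k) :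
    pderiv 1 (jetCoeff m F i) = ((m : MvPolynomial (Fin 2) k) - i) * jetCoeff m F (i + 1) := by
  obtain ⟨r, rfl⟩ := Nat.exists_eq_add_of_lt hi
  rw [jetCoeff, jetCoeff, pderiv_C_mul, Function.iterate_succ_apply',
    show i + r + 1 - i = r + 1 by omega, show i + r + 1 - (i + 1) = r by omega,
    Nat.factorial_succ r, Nat.cast_mul, mul_div_assoc, C_mul]
  simp only [map_add, map_one, map_natCast, Nat.cast_add, Nat.cast_one]
  ring

theorem pderiv_one_jetMinor {i j : ℕ} (hi : i < n) (hj : j < n) :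
    pderiv 1 (jetMinor n A B i j) =
      ((n : MvPolynomial (Fin 2) k) - i) * jetMinor n A B (i + 1) j
        + (n - j) * jetMinor n A B i (j + 1) := by
  simp only [jetMinor, map_sub, pderiv_mul, pderiv_one_jetCoeff hi, pderiv_one_jetCoeff hj]
  ring

theorem sub_natCast_mul_jetCoeff_succ {m i : ℕ} (hi : i < m) {c F P : MvPolynomial (Fin 2) k}
    (hc : pderiv 1 c = 0) (h : c * jetCoeff m F i = P) :
    ((m : MvPolynomial (Fin 2) k) - i) * (c * jetCoeff m F (i + 1)) = pderiv 1 P := by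
  rw [← h, pderiv_mul, hc, pderiv_one_jetCoeff hi]
  ring

variable [CharZero k]

theorem jetCoeff_zero (m : ℕ) (F : MvPolynomial (Fin 2) k) : jetCoeff m F 0 = F := by
  simp [jetCoeff, Nat.factorial_ne_zero]

theorem jetCoeff_pderiv_one (m : ℕ) (F : MvPolynomial (Fin 2) k) (i : ℕ) :
    jetCoeff m (pderiv 1 F) i =
      ((m : MvPolynomial (Fin 2) k) + 1) * jetCoeff (m + 1) F (i + 1) := by
  have coeff_eq : ((m - i).factorial / m.factorial : k) =
      (m + 1 : ℕ) * ((m - i).factorial / (m + 1).factorial) := by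
    rw [Nat.factorial_succ, Nat.cast_mul]
    field [Nat.factorial_ne_zero]
  rw [jetCoeff, jetCoeff, Nat.add_sub_add_right, coeff_eq, ← Function.iterate_succ_apply, C_mul]
  simp only [map_add, map_one, map_natCast, Nat.cast_add, Nat.cast_one, mul_assoc]

theorem X_mul_jetCoeff_pderiv_zero {m i : ℕ} {F : MvPolynomial (Fin 2) k}
    (hF : F.IsHomogeneous (m + 1)) (hi : i ≤ m) :
    x₁ * jetCoeff m (pderiv 0 F) i =
      ((m : MvPolynomial (Fin 2) k) + 1) *
        (jetCoeff (m + 1) F i - X 1 * jetCoeff (m + 1) F (i + 1)) := by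
  have euler := (isHomogeneous_iterate_pderiv hF 1 i).sum_X_mul_pderiv
  have coeff_eq : ((m + 1 - i : ℕ) : k) * ((m - i).factorial / m.factorial) =
      (m + 1 : ℕ) * ((m + 1 - i).factorial / (m + 1).factorial) := by
    rw [Nat.factorial_succ m, Nat.succ_sub hi, Nat.factorial_succ, Nat.cast_mul, Nat.cast_mul]
    field [Nat.factorial_ne_zero]
  replace coeff_eq := congrArg (C : k → MvPolynomial (Fin 2) k) coeff_eq
  simp only [C_mul, map_add, map_one, map_natCast, Nat.cast_add, Nat.cast_one] at coeff_eq
  rw [Fin.sum_univ_two, ← iterate_pderiv_pderiv, ← iterate_pderiv_pderiv, nsmul_eq_mul] at euler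
  rw [mul_sub, mul_left_comm _ (X 1), ← jetCoeff_pderiv_one]
  simp only [jetCoeff]
  linear_combination C ((m - i).factorial / m.factorial : k) * euler + (pderiv 1)^[i] F * coeff_eq

theorem transvectant_eq_sum_antidiagonal (m n q : ℕ) (F G : MvPolynomial (Fin 2) k) :
    transvectant m n q F G =
      C (((m - q).factorial * (n - q).factorial : k) / (m.factorial * n.factorial)) *
        ∑ ij ∈ antidiagonal q, (-1) ^ ij.1 * (q.choose ij.1 : MvPolynomial (Fin 2) k) *
          ((pderiv 0)^[ij.2] ((pderiv 1)^[ij.1] F) * (pderiv 0)^[ij.1] ((pderiv 1)^[ij.2] G)) := by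
  rw [transvectant, Nat.sum_antidiagonal_eq_sum_range_succ_mk]
  simp [mul_assoc]

theorem transvectant_succ (m n q : ℕ) (F G : MvPolynomial (Fin 2) k) :
    ((m : MvPolynomial (Fin 2) k) + 1) * (n + 1) * transvectant (m + 1) (n + 1) (q + 1) F G =
      transvectant m n q (pderiv 0 F) (pderiv 1 G)
        - transvectant m n q (pderiv 1 F) (pderiv 0 G) := by
  have coeff_eq : ((m + 1 : ℕ) * (n + 1 : ℕ) : k) *
      (((m - q).factorial * (n - q).factorial) / ((m + 1).factorial * (n + 1).factorial)) =
      ((m - q).factorial * (n - q).factorial) / (m.factorial * n.factorial) := by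
    rw [Nat.factorial_succ, Nat.factorial_succ, Nat.cast_mul, Nat.cast_mul]
    field [Nat.factorial_ne_zero]
  replace coeff_eq := congrArg (C : k → MvPolynomial (Fin 2) k) coeff_eq
  simp only [C_mul, map_add, map_one, map_natCast, Nat.cast_add, Nat.cast_one] at coeff_eq
  simp only [transvectant_eq_sum_antidiagonal]
  rw [sum_antidiagonal_neg_one_pow_choose_succ fun i j =>
    (pderiv 0)^[j] ((pderiv 1)^[i] F) * (pderiv 0)^[i] ((pderiv 1)^[j] G)]
  simp only [Nat.add_sub_add_right, ← mul_assoc, coeff_eq]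
  rw [← mul_sub, ← sum_sub_distrib]
  simp only [Function.iterate_succ_apply, iterate_pderiv_pderiv, mul_sub, mul_assoc]

theorem isHomogeneous_transvectant {m n q : ℕ} {F G : MvPolynomial (Fin 2) k}
    (hF : F.IsHomogeneous m) (hG : G.IsHomogeneous n) :
    (transvectant m n q F G).IsHomogeneous ((m - q) + (n - q)) := by
  have isHomogeneous_deriv {m : ℕ} {F : MvPolynomial (Fin 2) k} (hF : F.IsHomogeneous m) (i j : ℕ) :
      ((pderiv 0)^[i] ((pderiv 1)^[j] F)).IsHomogeneous (m - (i + j)) := by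
    rw [add_comm, ← Nat.sub_sub]
    exact isHomogeneous_iterate_pderiv (isHomogeneous_iterate_pderiv hF 1 j) 0 i
  rw [transvectant_eq_sum_antidiagonal]
  refine IsHomogeneous.C_mul (IsHomogeneous.sum _ _ _ fun ij hij => ?_) _
  obtain rfl := mem_antidiagonal.mp hij
  have h := (isHomogeneous_deriv hF ij.2 ij.1).mul (isHomogeneous_deriv hG ij.1 ij.2)
  rw [add_comm ij.2] at h
  simpa using h.C_mul ((-1) ^ ij.1 * ((ij.1 + ij.2).choose ij.1 : k))

theorem X_pow_mul_transvectant {m n q : ℕ} {F G : MvPolynomial (Fin 2) k}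
    (hF : F.IsHomogeneous m) (hG : G.IsHomogeneous n) (hm : q ≤ m) (hn : q ≤ n) :
    x₁ ^ q * transvectant m n q F G =
      ∑ ij ∈ antidiagonal q, (-1) ^ ij.1 * (q.choose ij.1 : MvPolynomial (Fin 2) k) *
        (jetCoeff m F ij.1 * jetCoeff n G ij.2) := by
  induction q generalizing m n F G with
  | zero => simp [transvectant, jetCoeff, Nat.factorial_ne_zero]
  | succ q ih =>
    obtain ⟨m, rfl⟩ := Nat.exists_eq_add_of_le' (Nat.one_le_of_lt hm)
    obtain ⟨n, rfl⟩ := Nat.exists_eq_add_of_le' (Nat.one_le_of_lt hn)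
    rw [Nat.add_le_add_iff_right] at hm hn
    have hmn : ((m : MvPolynomial (Fin 2) k) + 1) * (n + 1) ≠ 0 := by norm_cast
    refine mul_left_cancel₀ hmn ?_
    rw [mul_left_comm, transvectant_succ, pow_succ, mul_comm _ x₁, mul_assoc, mul_sub,
      ih (m := m) (n := n) hF.pderiv hG.pderiv hm hn,
      ih (m := m) (n := n) hF.pderiv hG.pderiv hm hn,
      sum_antidiagonal_neg_one_pow_choose_succ fun i j =>
        jetCoeff (m + 1) F i * jetCoeff (n + 1) G j,
      ← sum_sub_distrib, mul_sum, mul_sum]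
    refine sum_congr rfl fun ij hij => ?_
    have hF' := X_mul_jetCoeff_pderiv_zero hF ((HasAntidiagonal.antidiagonal.fst_le hij).trans hm)
    have hG' := X_mul_jetCoeff_pderiv_zero hG ((HasAntidiagonal.antidiagonal.snd_le hij).trans hn)
    simp only [jetCoeff_pderiv_one]
    linear_combination (-1) ^ ij.1 * (q.choose ij.1 : MvPolynomial (Fin 2) k) *
      ((n + 1) * jetCoeff (n + 1) G (ij.2 + 1) * hF'
        - (m + 1) * jetCoeff (m + 1) F (ij.1 + 1) * hG')

theorem X_mul_transvectant_one (hA : A.IsHomogeneous n) (hB : B.IsHomogeneous n) (hn : 1 ≤ n) :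
    x₁ * transvectant n n 1 A B = jetMinor n A B 0 1 := by
  rw [← pow_one x₁, X_pow_mul_transvectant hA hB hn hn, jetMinor]
  simp only [Nat.sum_antidiagonal_eq_sum_range_succ_mk, sum_range_succ, sum_range_zero, Nat.choose,
    Nat.reduceAdd, Nat.reduceSub]
  push_cast
  ring

theorem X_pow_mul_transvectant_three (hA : A.IsHomogeneous n) (hB : B.IsHomogeneous n)
    (hn : 3 ≤ n) :
    x₁ ^ 3 * transvectant n n 3 A B = jetMinor n A B 0 3 - 3 * jetMinor n A B 1 2 := by
  rw [X_pow_mul_transvectant hA hB hn hn]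
  simp only [Nat.sum_antidiagonal_eq_sum_range_succ_mk, sum_range_succ, sum_range_zero, Nat.choose,
    Nat.reduceAdd, Nat.reduceSub, jetMinor]
  push_cast
  ring

theorem X_pow_mul_transvectant_five (hA : A.IsHomogeneous n) (hB : B.IsHomogeneous n)
    (hn : 5 ≤ n) :
    x₁ ^ 5 * transvectant n n 5 A B =
      jetMinor n A B 0 5 - 5 * jetMinor n A B 1 4 + 10 * jetMinor n A B 2 3 := by
  rw [X_pow_mul_transvectant hA hB hn hn]
  simp only [Nat.sum_antidiagonal_eq_sum_range_succ_mk, sum_range_succ, sum_range_zero, Nat.choose,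
    Nat.reduceAdd, Nat.reduceSub, jetMinor]
  push_cast
  ring

theorem X_pow_mul_transvectant_two {l m : ℕ} {F G : MvPolynomial (Fin 2) k}
    (hF : F.IsHomogeneous l) (hG : G.IsHomogeneous m) (hl : 2 ≤ l) (hm : 2 ≤ m) :
    x₁ ^ 2 * transvectant l m 2 F G =
      F * jetCoeff m G 2 - 2 * jetCoeff l F 1 * jetCoeff m G 1 + jetCoeff l F 2 * G := by
  rw [X_pow_mul_transvectant hF hG hl hm]
  simp only [Nat.sum_antidiagonal_eq_sum_range_succ_mk, sum_range_succ, sum_range_zero, Nat.choose,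
    Nat.reduceAdd, Nat.reduceSub, jetCoeff_zero]
  push_cast
  ring

theorem X_pow_mul_transvectant_four_self {m : ℕ} {F : MvPolynomial (Fin 2) k}
    (hF : F.IsHomogeneous m) (hm : 4 ≤ m) :
    x₁ ^ 4 * transvectant m m 4 F F =
      2 * F * jetCoeff m F 4 - 8 * jetCoeff m F 1 * jetCoeff m F 3 + 6 * jetCoeff m F 2 ^ 2 := by
  rw [X_pow_mul_transvectant hF hF hm hm]
  simp only [Nat.sum_antidiagonal_eq_sum_range_succ_mk, sum_range_succ, sum_range_zero, Nat.choose,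
    Nat.reduceAdd, Nat.reduceSub, jetCoeff_zero]
  push_cast
  ring

theorem X_mul_jetCoeff_one_transvectant_one (hA : A.IsHomogeneous n) (hB : B.IsHomogeneous n)
    (hn : 2 ≤ n) :
    2 * x₁ * jetCoeff (2 * n - 2) (transvectant n n 1 A B) 1 = jetMinor n A B 0 2 := by
  have h := X_mul_transvectant_one hA hB (by omega)
  rw [← jetCoeff_zero (2 * n - 2) (transvectant n n 1 A B)] at h
  replace h := sub_natCast_mul_jetCoeff_succ (by omega) (by simp [pderiv_X]) h
  rw [pderiv_one_jetMinor (by omega) (by omega), jetMinor_self] at h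
  refine mul_left_cancel₀ (natCast_sub_natCast_ne_zero (by omega : n ≠ 1)) ?_
  push_cast [Nat.cast_sub (by omega : 2 ≤ 2 * n)] at h ⊢
  linear_combination h

theorem X_mul_jetCoeff_two_transvectant_one (hA : A.IsHomogeneous n) (hB : B.IsHomogeneous n)
    (hn : 3 ≤ n) :
    2 * (2 * n - 3) * x₁ * jetCoeff (2 * n - 2) (transvectant n n 1 A B) 2 =
      n * jetMinor n A B 1 2 + (n - 2) * jetMinor n A B 0 3 := by
  have h := sub_natCast_mul_jetCoeff_succ (by omega) (by simp [pderiv_X, pderiv_ofNat])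
    (X_mul_jetCoeff_one_transvectant_one hA hB (by omega))
  rw [pderiv_one_jetMinor (by omega) (by omega)] at h
  push_cast [Nat.cast_sub (by omega : 2 ≤ 2 * n)] at h
  linear_combination h

theorem X_mul_jetCoeff_three_transvectant_one (hA : A.IsHomogeneous n) (hB : B.IsHomogeneous n)
    (hn : 4 ≤ n) :
    4 * (2 * n - 3) * x₁ * jetCoeff (2 * n - 2) (transvectant n n 1 A B) 3 =
      2 * n * jetMinor n A B 1 3 + (n - 3) * jetMinor n A B 0 4 := by
  have h := sub_natCast_mul_jetCoeff_succ (by omega) (by simp [pderiv_X, pderiv_ofNat])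
    (X_mul_jetCoeff_two_transvectant_one hA hB (by omega))
  simp only [map_add, map_sub, pderiv_mul, Derivation.map_natCast, pderiv_ofNat,
    pderiv_one_jetMinor (show 1 < n by omega) (show 2 < n by omega),
    pderiv_one_jetMinor (show 0 < n by omega) (show 3 < n by omega), jetMinor_self] at h
  refine mul_left_cancel₀ (natCast_sub_natCast_ne_zero (by omega : n ≠ 2)) ?_
  push_cast [Nat.cast_sub (by omega : 2 ≤ 2 * n)] at h ⊢
  linear_combination h

theorem X_mul_jetCoeff_four_transvectant_one (hA : A.IsHomogeneous n) (hB : B.IsHomogeneous n)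
    (hn : 5 ≤ n) :
    4 * (2 * n - 3) * (2 * n - 5) * x₁ * jetCoeff (2 * n - 2) (transvectant n n 1 A B) 4 =
      2 * n * (n - 1) * jetMinor n A B 2 3 + 3 * n * (n - 3) * jetMinor n A B 1 4
        + (n - 3) * (n - 4) * jetMinor n A B 0 5 := by
  have h := sub_natCast_mul_jetCoeff_succ (by omega) (by simp [pderiv_X, pderiv_ofNat])
    (X_mul_jetCoeff_three_transvectant_one hA hB (by omega))
  simp only [map_add, map_sub, pderiv_mul, Derivation.map_natCast, pderiv_ofNat,
    pderiv_one_jetMinor (show 1 < n by omega) (show 3 < n by omega),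
    pderiv_one_jetMinor (show 0 < n by omega) (show 4 < n by omega)] at h
  push_cast [Nat.cast_sub (by omega : 2 ≤ 2 * n)] at h
  linear_combination h

theorem X_pow_mul_jetCoeff_one_transvectant_three (hA : A.IsHomogeneous n) (hB : B.IsHomogeneous n)
    (hn : 4 ≤ n) :
    2 * x₁ ^ 3 * jetCoeff (2 * n - 6) (transvectant n n 3 A B) 1 =
      jetMinor n A B 0 4 - 2 * jetMinor n A B 1 3 := by
  have h := X_pow_mul_transvectant_three hA hB (by omega)
  rw [← jetCoeff_zero (2 * n - 6) (transvectant n n 3 A B)] at h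
  replace h := sub_natCast_mul_jetCoeff_succ (by omega) (by simp [pderiv_X]) h
  simp only [map_sub, pderiv_mul, pderiv_ofNat,
    pderiv_one_jetMinor (show 1 < n by omega) (show 2 < n by omega),
    pderiv_one_jetMinor (show 0 < n by omega) (show 3 < n by omega), jetMinor_self] at h
  refine mul_left_cancel₀ (natCast_sub_natCast_ne_zero (by omega : n ≠ 3)) ?_
  push_cast [Nat.cast_sub (by omega : 6 ≤ 2 * n)] at h ⊢
  linear_combination h

theorem X_pow_mul_jetCoeff_two_transvectant_three (hA : A.IsHomogeneous n) (hB : B.IsHomogeneous n)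
    (hn : 5 ≤ n) :
    2 * (2 * n - 7) * x₁ ^ 3 * jetCoeff (2 * n - 6) (transvectant n n 3 A B) 2 =
      (n - 4) * jetMinor n A B 0 5 + (6 - n) * jetMinor n A B 1 4
        - 2 * (n - 1) * jetMinor n A B 2 3 := by
  have h := sub_natCast_mul_jetCoeff_succ (by omega) (by simp [pderiv_X, pderiv_ofNat])
    (X_pow_mul_jetCoeff_one_transvectant_three hA hB (by omega))
  simp only [map_sub, pderiv_mul, pderiv_ofNat,
    pderiv_one_jetMinor (show 1 < n by omega) (show 3 < n by omega),
    pderiv_one_jetMinor (show 0 < n by omega) (show 4 < n by omega)] at h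
  push_cast [Nat.cast_sub (by omega : 6 ≤ 2 * n)] at h
  linear_combination h

theorem X_pow_mul_transvectant_one_one_four (hA : A.IsHomogeneous n) (hB : B.IsHomogeneous n)
    (hn : 5 ≤ n) :
    4 * (2 * n - 3) ^ 2 * (2 * n - 5) * x₁ ^ 6 *
        transvectant (2 * n - 2) (2 * n - 2) 4 (transvectant n n 1 A B) (transvectant n n 1 A B) =
      2 * (2 * n - 3) * jetMinor n A B 0 1 * (2 * n * (n - 1) * jetMinor n A B 2 3
          + 3 * n * (n - 3) * jetMinor n A B 1 4 + (n - 3) * (n - 4) * jetMinor n A B 0 5)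
        - 4 * (2 * n - 3) * (2 * n - 5) * jetMinor n A B 0 2 *
          (2 * n * jetMinor n A B 1 3 + (n - 3) * jetMinor n A B 0 4)
        + 6 * (2 * n - 5) * (n * jetMinor n A B 1 2 + (n - 2) * jetMinor n A B 0 3) ^ 2 := by
  have hC₁ : (transvectant n n 1 A B).IsHomogeneous (2 * n - 2) := by
    convert isHomogeneous_transvectant hA hB using 1
    omega
  rw [← X_mul_transvectant_one hA hB (by omega),
    ← X_mul_jetCoeff_one_transvectant_one hA hB (by omega),
    ← X_mul_jetCoeff_two_transvectant_one hA hB (by omega),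
    ← X_mul_jetCoeff_three_transvectant_one hA hB (by omega),
    ← X_mul_jetCoeff_four_transvectant_one hA hB hn]
  linear_combination 4 * (2 * n - 3) ^ 2 * (2 * n - 5) * x₁ ^ 2 *
    X_pow_mul_transvectant_four_self hC₁ (by omega)

theorem X_pow_mul_transvectant_one_three_two (hA : A.IsHomogeneous n) (hB : B.IsHomogeneous n)
    (hn : 5 ≤ n) :
    2 * (2 * n - 3) * (2 * n - 7) * x₁ ^ 6 *
        transvectant (2 * n - 2) (2 * n - 6) 2 (transvectant n n 1 A B) (transvectant n n 3 A B) =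
      (2 * n - 3) * jetMinor n A B 0 1 * ((n - 4) * jetMinor n A B 0 5
          + (6 - n) * jetMinor n A B 1 4 - 2 * (n - 1) * jetMinor n A B 2 3)
        - (2 * n - 3) * (2 * n - 7) * jetMinor n A B 0 2 *
          (jetMinor n A B 0 4 - 2 * jetMinor n A B 1 3)
        + (2 * n - 7) * (n * jetMinor n A B 1 2 + (n - 2) * jetMinor n A B 0 3) *
          (jetMinor n A B 0 3 - 3 * jetMinor n A B 1 2) := by
  have hC₁ : (transvectant n n 1 A B).IsHomogeneous (2 * n - 2) := by
    convert isHomogeneous_transvectant hA hB using 1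
    omega
  have hC₃ : (transvectant n n 3 A B).IsHomogeneous (2 * n - 6) := by
    convert isHomogeneous_transvectant hA hB using 1
    omega
  rw [← X_mul_transvectant_one hA hB (by omega),
    ← X_mul_jetCoeff_one_transvectant_one hA hB (by omega),
    ← X_mul_jetCoeff_two_transvectant_one hA hB (by omega),
    ← X_pow_mul_transvectant_three hA hB (by omega),
    ← X_pow_mul_jetCoeff_one_transvectant_three hA hB (by omega),
    ← X_pow_mul_jetCoeff_two_transvectant_three hA hB hn]
  linear_combination 2 * (2 * n - 3) * (2 * n - 7) * x₁ ^ 4 *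
    X_pow_mul_transvectant_two hC₁ hC₃ (by omega) (by omega)

theorem transvectant_syzygy_cleared (hA : A.IsHomogeneous n) (hB : B.IsHomogeneous n)
    (hn : 5 ≤ n) :
    (n - 3) * (n - 4) * (2 * n - 3) ^ 2 * (transvectant n n 1 A B * transvectant n n 5 A B) =
      -(2 * (2 * n - 5) * (2 * n - 7) * (2 * n - 3) ^ 2) *
          transvectant (2 * n - 2) (2 * n - 2) 4 (transvectant n n 1 A B) (transvectant n n 1 A B)
        + 4 * (2 * n - 5) * (2 * n - 7) * (n - 3) * (2 * n - 3) *
          transvectant (2 * n - 2) (2 * n - 6) 2 (transvectant n n 1 A B) (transvectant n n 3 A B)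
        + n * (n - 2) * (2 * n - 5) * (2 * n - 7) * transvectant n n 3 A B ^ 2 := by
  have hC₁ := X_mul_transvectant_one hA hB (by omega)
  have hC₃ := X_pow_mul_transvectant_three hA hB (by omega)
  have hC₅ := X_pow_mul_transvectant_five hA hB hn
  have hC₁₁ := X_pow_mul_transvectant_one_one_four hA hB hn
  have hC₁₃ := X_pow_mul_transvectant_one_three_two hA hB hn
  have pluecker := jetMinor_pluecker (n := n) (A := A) (B := B) 0 1 2 3
  set C₁ := transvectant n n 1 A B
  set C₃ := transvectant n n 3 A B
  set C₅ := transvectant n n 5 A B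
  set C₁₁ := transvectant (2 * n - 2) (2 * n - 2) 4 C₁ C₁
  set C₁₃ := transvectant (2 * n - 2) (2 * n - 6) 2 C₁ C₃
  have X_pow_ne_zero : 2 * x₁ ^ 6 ≠ 0 := mul_ne_zero two_ne_zero (pow_ne_zero 6 (X_ne_zero 0))
  refine mul_left_cancel₀ X_pow_ne_zero ?_
  calc 2 * x₁ ^ 6 * ((n - 3) * (n - 4) * (2 * n - 3) ^ 2 * (C₁ * C₅))
      = 2 * (n - 3) * (n - 4) * (2 * n - 3) ^ 2 * ((x₁ * C₁) * (x₁ ^ 5 * C₅)) := by ring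
    _ = -(2 * n - 7) * (4 * (2 * n - 3) ^ 2 * (2 * n - 5) * x₁ ^ 6 * C₁₁)
          + 4 * (2 * n - 5) * (n - 3) * (2 * (2 * n - 3) * (2 * n - 7) * x₁ ^ 6 * C₁₃)
          + 2 * n * (n - 2) * (2 * n - 5) * (2 * n - 7) * (x₁ ^ 3 * C₃) ^ 2 := by
        rw [hC₁, hC₃, hC₅, hC₁₁, hC₁₃]
        linear_combination 8 * (2 * n - 3) ^ 2 * (2 * n - 5) * (2 * n - 7) * pluecker
    _ = _ := by ring

theorem syzygy_d7_r3_general (hn : 5 ≤ n) (hA : A.IsHomogeneous n) (hB : B.IsHomogeneous n) :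
    transvectant n n 1 A B * transvectant n n 5 A B =
      C (-(2 * (2 * n - 5) * (2 * n - 7) / ((n - 3) * (n - 4))) : k) *
          transvectant (2 * n - 2) (2 * n - 2) 4 (transvectant n n 1 A B) (transvectant n n 1 A B)
        + C (4 * (2 * n - 5) * (2 * n - 7) / ((n - 4) * (2 * n - 3)) : k) *
          transvectant (2 * n - 2) (2 * n - 6) 2 (transvectant n n 1 A B) (transvectant n n 3 A B)
        + C (n * (n - 2) * (2 * n - 5) * (2 * n - 7) / ((n - 3) * (n - 4) * (2 * n - 3) ^ 2) : k) *
          transvectant n n 3 A B ^ 2 := by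
  have sub_three_ne_zero : (n : k) - 3 ≠ 0 :=
    mod_cast natCast_sub_natCast_ne_zero (R := k) (by omega : n ≠ 3)
  have sub_four_ne_zero : (n : k) - 4 ≠ 0 :=
    mod_cast natCast_sub_natCast_ne_zero (R := k) (by omega : n ≠ 4)
  have two_mul_sub_three_ne_zero : 2 * (n : k) - 3 ≠ 0 :=
    mod_cast natCast_sub_natCast_ne_zero (R := k) (by omega : 2 * n ≠ 3)
  set δ : k := (n - 3) * (n - 4) * (2 * n - 3) ^ 2 with hδ
  have δ_ne_zero : δ ≠ 0 :=
    mul_ne_zero (mul_ne_zero sub_three_ne_zero sub_four_ne_zero)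
      (pow_ne_zero 2 two_mul_sub_three_ne_zero)
  have hα : δ * -(2 * (2 * n - 5) * (2 * n - 7) / ((n - 3) * (n - 4))) =
      -(2 * (2 * n - 5) * (2 * n - 7) * (2 * n - 3) ^ 2) := by
    rw [hδ]
    field
  have hβ : δ * (4 * (2 * n - 5) * (2 * n - 7) / ((n - 4) * (2 * n - 3))) =
      4 * (2 * n - 5) * (2 * n - 7) * (n - 3) * (2 * n - 3) := by
    rw [hδ]
    field
  have hγ := mul_div_cancel₀ (n * (n - 2) * (2 * n - 5) * (2 * n - 7) : k) δ_ne_zero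
  refine mul_left_cancel₀ (C_ne_zero.mpr δ_ne_zero) ?_
  simp only [mul_add, ← mul_assoc (C δ), ← C_mul, hα, hβ, hγ]
  simp only [hδ, map_mul, map_sub, map_pow, map_neg, map_natCast, map_ofNat]
  linear_combination transvectant_syzygy_cleared hA hB hn

end

/-- For binary forms `A, B` of order `7`, writing `𝒞_q = (A,B)_q`, one has
`𝒞₁·𝒞₅ = −(21/2)·(𝒞₁,𝒞₁)₄ + (84/11)·(𝒞₁,𝒞₃)₂ + (735/484)·𝒞₃²`. -/
theorem syzygy_d7_r3 {k : Type*} [Field k] [CharZero k] (d : ℕ) (hd : 7 ≤ d)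
    (A B : MvPolynomial (Fin 2) k)
    (hA : A.IsHomogeneous 7) (hB : B.IsHomogeneous 7) :
    transvectant 7 7 1 A B * transvectant 7 7 5 A B =
      C (-(21 / 2 : k)) *
          transvectant 12 12 4 (transvectant 7 7 1 A B) (transvectant 7 7 1 A B)
        + C ((84 / 11 : k)) *
            transvectant 12 8 2 (transvectant 7 7 1 A B) (transvectant 7 7 3 A B)
        + C ((735 / 484 : k)) * (transvectant 7 7 3 A B) ^ 2 := by
  convert syzygy_d7_r3_general (by norm_num) hA hB using 4 <;> norm_num
end

section
/- Main Theorem (explicit quadratic syzygy of weight 2r). Let d, r be integers with 3 ≤ r ≤ (d+1)/2. For each pair (i,j) with 1 ≤ i, j ≤ r and i+j ≤ r+1 define N₁(i,j) = (2di + 2dj − dr − 2i² − 2j² − 2d + 3i + 3j − 2) · d!·(d−1)!·(2r−1)!·(2d−4i+3)!·(2d−4j+3)!, N₂(i,j) = (2i−1)!·(2j−1)!·(d−2i+1)!·(d−2j+1)!·(2d−2i+2)!·(2d−2j+2)!·(2r−2i−2j+2)!, θ_{i,j} = δ_{i,1}δ_{j,r} + δ_{i,r}δ_{j,1} − 8·N₁(i,j)/N₂(i,j)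 (where δ is the Kronecker delta), and α_{i,j} = ε_{i,j}·θ_{i,j} where ε_{i,j} = 2 if i ≠ j and 1 if i = j. Then for all binary forms A, B of order d over a field of characteristic zero, writing 𝒞_{2i−1} = (A,B)_{2i−1}, one has Σ α_{i,j} · (𝒞_{2i−1}, 𝒞_{2j−1})_{2(r−i−j+1)} = 0, where the sum ranges over all pairs (i,j) with 1 ≤ i ≤ j ≤ r and i+j ≤ r+1. -/
/-!
Write `Ω_q` for the transvectant without its numerical factor. For forms `A`, `B`, `C`, `D` of
order `d`, the product `(A, C)₁ (B, D)_N` is a combination of the terms `∂ᵢA · ∂ⱼC · (B, D)_N`,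
and Gordan's series, applied first to `∂ᵢA` and `B` and then to `∂ⱼC` and `D`, turns each of them
into a combination of `((∂ᵢA, B)_p, (∂ⱼC, D)_q)_m`. The derivatives recombine, so that the product
is a linear combination of `((A, B)_p, (C, D)_q)_{N + 1 - p - q}`.

Now let `N = 2r - 1`, put `(C, D) = (A, B)` and antisymmetrise in either pair: only odd `p` and `q`
survive, while the transvectants `(A, A)₁` and `(B, B)₁` vanish. This writes `𝒞₁ 𝒞_{2r-1}` as a
combination of the covariants `(𝒞_{2i-1}, 𝒞_{2j-1})_{2(r-i-j+1)}`, whose coefficients satisfy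
hypergeometric recurrences and come out as `4 N₁(i,j) / N₂(i,j)`. Since `(𝒞₁, 𝒞_{2r-1})₀` is the
same product, this is a linear relation between the covariants; the two `δ`-terms of `θ` contribute
the product twice and the `N₁/N₂`-terms subtract it twice.
-/

open MvPolynomial Finset

/-- `N₁(i,j) = (2di+2dj−dr−2i²−2j²−2d+3i+3j−2)·d!·(d−1)!·(2r−1)!·(2d−4i+3)!·(2d−4j+3)!`. -/
noncomputable def N1 (d r i j : ℕ) : ℚ :=
  (2 * (d : ℚ) * i + 2 * d * j - d * r - 2 * i ^ 2 - 2 * j ^ 2 - 2 * d + 3 * i + 3 * j - 2) *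
    ((d.factorial * (d - 1).factorial * (2 * r - 1).factorial *
      (2 * d + 3 - 4 * i).factorial * (2 * d + 3 - 4 * j).factorial : ℕ) : ℚ)

/-- `N₂(i,j) = (2i−1)!·(2j−1)!·(d−2i+1)!·(d−2j+1)!·(2d−2i+2)!·(2d−2j+2)!·(2r−2i−2j+2)!`. -/
noncomputable def N2 (d r i j : ℕ) : ℚ :=
  (((2 * i - 1).factorial * (2 * j - 1).factorial *
    (d + 1 - 2 * i).factorial * (d + 1 - 2 * j).factorial *
    (2 * d + 2 - 2 * i).factorial * (2 * d + 2 - 2 * j).factorial *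
    (2 * r + 2 - 2 * i - 2 * j).factorial : ℕ) : ℚ)

/-- `θ_{i,j} = δ_{i,1}δ_{j,r} + δ_{i,r}δ_{j,1} − 8·N₁(i,j)/N₂(i,j)`. -/
noncomputable def theta (d r i j : ℕ) : ℚ :=
  (if i = 1 then 1 else 0) * (if j = r then 1 else 0)
    + (if i = r then 1 else 0) * (if j = 1 then 1 else 0)
    - 8 * N1 d r i j / N2 d r i j

/-- `α_{i,j} = ε_{i,j}·θ_{i,j}` with `ε_{i,j} = 2` if `i ≠ j` and `1` if `i = j`. -/
noncomputable def alpha (d r i j : ℕ) : ℚ :=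
  (if i = j then 1 else 2) * theta d r i j

namespace QuadraticSyzygy

open scoped TensorProduct

/-! ### Cayley's Ω-process -/

/-- The operator `∂ᵢ ⊗ ∂ⱼ`, where a tensor `F ⊗ G` stands for the polynomial `F(x) G(y)`. -/
noncomputable def pderivTensor (R : Type*) [CommRing R] (i j : Fin 2) :
    Module.End R (MvPolynomial (Fin 2) R ⊗[R] MvPolynomial (Fin 2) R) :=
  TensorProduct.map (pderiv i : Derivation R _ _).toLinearMap (pderiv j).toLinearMap

/-- Cayley's operator `∂₁ ⊗ ∂₂ - ∂₂ ⊗ ∂₁`. -/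
noncomputable def cayleyOperator (R : Type*) [CommRing R] :
    Module.End R (MvPolynomial (Fin 2) R ⊗[R] MvPolynomial (Fin 2) R) :=
  pderivTensor R 0 1 - pderivTensor R 1 0

/-- Cayley's Ω-process: `cayleyOperator` applied `q` times to `F(x) G(y)`, followed by `y = x`.
It is the `q`-th transvectant without its normalising factor. -/
noncomputable def cayleyOmega {R : Type*} [CommRing R] (q : ℕ) :
    MvPolynomial (Fin 2) R →ₗ[R] MvPolynomial (Fin 2) R →ₗ[R] MvPolynomial (Fin 2) R :=
  (TensorProduct.mk R _ _).compr₂ (LinearMap.mul' R _ ∘ₗ cayleyOperator R ^ q)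

local notation "Ω" => cayleyOmega

section Cayley

variable {R : Type*} [CommRing R]

lemma cayleyOmega_zero (F G : MvPolynomial (Fin 2) R) : Ω 0 F G = F * G := by
  simp [cayleyOmega]

lemma cayleyOmega_succ (q : ℕ) (F G : MvPolynomial (Fin 2) R) :
    Ω (q + 1) F G = Ω q (pderiv 0 F) (pderiv 1 G) - Ω q (pderiv 1 F) (pderiv 0 G) := by
  simp [cayleyOmega, cayleyOperator, pderivTensor, pow_succ]

lemma pderiv_comm {σ : Type*} (i j : σ) (F : MvPolynomial σ R) :
    pderiv i (pderiv j F) = pderiv j (pderiv i F) := by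
  have h : ⁅pderiv (R := R) i, pderiv (R := R) j⁆ = 0 := by
    classical
    refine derivation_ext fun l => ?_
    simp [Derivation.commutator_apply, pderiv_X, Pi.single_apply, apply_ite]
  simpa [Derivation.commutator_apply, sub_eq_zero] using DFunLike.congr_fun h F

lemma commute_pderivTensor (i j k l : Fin 2) :
    Commute (pderivTensor R i j) (pderivTensor R k l) :=
  TensorProduct.ext' fun F G => by simp [pderivTensor, pderiv_comm i, pderiv_comm j]

lemma pderivTensor_pow_tmul (i j : Fin 2) (n : ℕ) (F G : MvPolynomial (Fin 2) R) :
    (pderivTensor R i j ^ n) (F ⊗ₜ G) = (pderiv i)^[n] F ⊗ₜ (pderiv j)^[n] G := by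
  simp [pderivTensor, TensorProduct.map_pow, Module.End.pow_apply]

lemma sub_pow_eq_sum_of_commute {S : Type*} [Ring S] [Algebra R S] {x y : S} (h : Commute x y)
    (n : ℕ) : (x - y) ^ n =
      ∑ i ∈ range (n + 1), ((-1) ^ i * (n.choose i : R)) • (x ^ (n - i) * y ^ i) := by
  rw [sub_eq_neg_add, h.symm.neg_left.add_pow]
  refine sum_congr rfl fun i _ => ?_
  rw [neg_pow, (h.pow_pow (n - i) i).eq, Algebra.smul_def, map_mul, map_pow, map_neg, map_one,
    map_natCast, mul_assoc, mul_assoc, mul_assoc, ← mul_assoc (y ^ i), Nat.cast_comm]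

lemma cayleyOmega_eq_sum (q : ℕ) (F G : MvPolynomial (Fin 2) R) :
    Ω q F G = ∑ i ∈ range (q + 1),
      C ((-1) ^ i * (q.choose i : R)) * (pderiv 0)^[q - i] ((pderiv 1)^[i] F) *
        (pderiv 0)^[i] ((pderiv 1)^[q - i] G) := by
  have h_pow : cayleyOperator R ^ q = ∑ i ∈ range (q + 1), ((-1) ^ i * (q.choose i : R)) •
      (pderivTensor R 0 1 ^ (q - i) * pderivTensor R 1 0 ^ i) :=
    sub_pow_eq_sum_of_commute (x := pderivTensor R 0 1) (commute_pderivTensor 0 1 1 0) q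
  have h_iter (m n : ℕ) : (pderiv 1)^[m] ((pderiv 0)^[n] G) = (pderiv 0)^[n] ((pderiv 1)^[m] G) :=
    (Function.Commute.iterate_iterate (pderiv_comm 1 0) m n).eq G
  simp [cayleyOmega, h_pow, pderivTensor_pow_tmul, h_iter, smul_eq_C_mul, mul_assoc]

lemma pderiv_X_self_mul {σ : Type*} (i : σ) (F : MvPolynomial σ R) :
    pderiv i (X i * F) = F + X i * pderiv i F := by
  simp [add_comm]

lemma pderiv_X_mul_of_ne {σ : Type*} {i j : σ} (h : j ≠ i) (F : MvPolynomial σ R) :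
    pderiv i (X j * F) = X j * pderiv i F := by
  simp [pderiv_X_of_ne h]

lemma pderiv_cayleyOmega (i : Fin 2) (q : ℕ) (F G : MvPolynomial (Fin 2) R) :
    pderiv i (Ω q F G) = Ω q (pderiv i F) G + Ω q F (pderiv i G) := by
  induction q generalizing F G with
  | zero => simp [cayleyOmega_zero, mul_comm, add_comm]
  | succ q ih => simp only [cayleyOmega_succ, map_sub, ih, pderiv_comm i]; abel

lemma cayleyOmega_swap (q : ℕ) (F G : MvPolynomial (Fin 2) R) :
    Ω q G F = (-1 : R) ^ q • Ω q F G := by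
  induction q generalizing F G with
  | zero => simp [cayleyOmega_zero, mul_comm]
  | succ q ih =>
    rw [cayleyOmega_succ, cayleyOmega_succ, ih (pderiv 1 F), ih (pderiv 0 F)]
    module

lemma cayleyOmega_eq_zero_of_lt {a q : ℕ} (h : a < q) {F : MvPolynomial (Fin 2) R}
    (hF : F.IsHomogeneous a) (G : MvPolynomial (Fin 2) R) : Ω q F G = 0 := by
  induction q generalizing a F G with
  | zero => omega
  | succ q ih =>
    rw [cayleyOmega_succ]
    rcases a.eq_zero_or_pos with rfl | ha
    · rw [← totalDegree_zero_iff_isHomogeneous, totalDegree_eq_zero_iff_eq_C] at hF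
      rw [hF]
      simp
    · rw [ih (by omega) hF.pderiv, ih (by omega) hF.pderiv, sub_zero]

/-- Euler's equation `∑ xᵢ ∂ᵢF = m F`, satisfied by the forms of order `m`. The order is a scalar
here, so that it can be lowered freely by differentiation. -/
def HasEulerDegree {σ : Type*} [Fintype σ] (m : R) (F : MvPolynomial σ R) : Prop :=
  ∑ i, X i * pderiv i F = m • F

lemma hasEulerDegree_fin_two {m : R} {F : MvPolynomial (Fin 2) R} :
    HasEulerDegree m F ↔ X 0 * pderiv 0 F + X 1 * pderiv 1 F = m • F := by
  rw [HasEulerDegree, Fin.sum_univ_two]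

lemma hasEulerDegree_of_isHomogeneous {σ : Type*} [Fintype σ] {n : ℕ} {F : MvPolynomial σ R}
    (h : F.IsHomogeneous n) : HasEulerDegree (n : R) F := by
  rw [HasEulerDegree, h.sum_X_mul_pderiv, Nat.cast_smul_eq_nsmul]

lemma HasEulerDegree.pderiv {σ : Type*} [Fintype σ] {m : R} {F : MvPolynomial σ R}
    (h : HasEulerDegree m F) (j : σ) : HasEulerDegree (m - 1) (pderiv j F) := by
  classical
  have hj := congrArg (MvPolynomial.pderiv j) h
  simp only [map_sum, Derivation.leibniz, pderiv_X, Pi.single_apply, smul_eq_mul, mul_ite, mul_one,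
    mul_zero, sum_add_distrib, sum_ite_eq', mem_univ, if_true, Derivation.map_smul,
    pderiv_comm j] at hj
  rw [HasEulerDegree]
  linear_combination (norm := module) hj

lemma HasEulerDegree.cayleyOmega {m n : R} (q : ℕ) {F G : MvPolynomial (Fin 2) R}
    (hF : HasEulerDegree m F) (hG : HasEulerDegree n G) :
    HasEulerDegree (m + n - 2 * q) (Ω q F G) := by
  induction q generalizing F G m n with
  | zero =>
    simp only [hasEulerDegree_fin_two, cayleyOmega_zero, Derivation.leibniz, smul_eq_mul,
      smul_eq_C_mul, Nat.cast_zero, mul_zero, sub_zero, map_add] at *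
    linear_combination G * hF + F * hG
  | succ q ih =>
    have h₁ := ih (hF.pderiv 0) (hG.pderiv 1)
    have h₂ := ih (hF.pderiv 1) (hG.pderiv 0)
    rw [hasEulerDegree_fin_two] at *
    rw [cayleyOmega_succ, map_sub, map_sub, mul_sub, mul_sub]
    push_cast
    linear_combination (norm := module) h₁ - h₂

lemma cayleyOmega_sum_X_mul_pderiv {g : R} (q : ℕ) (F : MvPolynomial (Fin 2) R)
    {G : MvPolynomial (Fin 2) R} (hG : HasEulerDegree g G) :
    ∑ i, Ω q (X i * F) (pderiv i G) = (g - q) • Ω q F G := by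
  induction q generalizing F G g with
  | zero =>
    simp only [hasEulerDegree_fin_two, Fin.sum_univ_two, cayleyOmega_zero, smul_eq_C_mul,
      Nat.cast_zero, sub_zero] at *
    linear_combination F * hG
  | succ q ih =>
    have h₁ := ih (pderiv 0 F) (hG.pderiv 1)
    have h₂ := ih (pderiv 1 F) (hG.pderiv 0)
    simp only [Fin.sum_univ_two, cayleyOmega_succ, pderiv_X_self_mul, pderiv_X_mul_of_ne, ne_eq,
      zero_ne_one, one_ne_zero, not_false_eq_true, map_add, LinearMap.add_apply,
      pderiv_comm (1 : Fin 2) 0] at *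
    push_cast
    linear_combination (norm := module) h₁ - h₂

lemma cayleyOmega_sum_pderiv_X_mul {f : R} (q : ℕ) {F : MvPolynomial (Fin 2) R}
    (hF : HasEulerDegree f F) (G : MvPolynomial (Fin 2) R) :
    ∑ i, Ω q (pderiv i F) (X i * G) = (f - q) • Ω q F G := by
  simp only [cayleyOmega_swap q (X _ * G), ← smul_sum, cayleyOmega_sum_X_mul_pderiv q G hF]
  rw [cayleyOmega_swap q G F]
  module

/-- Lowering the bracket `x₁y₂ - x₂y₁` by Cayley's operator. -/
lemma cayleyOmega_bracket {m n : R} (q : ℕ) {F G : MvPolynomial (Fin 2) R}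
    (hF : HasEulerDegree m F) (hG : HasEulerDegree n G) :
    Ω q (X 0 * F) (X 1 * G) - Ω q (X 1 * F) (X 0 * G) =
      (q * (m + n + 3 - q)) • Ω (q - 1) F G := by
  induction q generalizing F G m n with
  | zero => simp only [cayleyOmega_zero, Nat.cast_zero, zero_mul, zero_smul]; ring
  | succ q ih =>
    have h₁ := ih (hF.pderiv 0) (hG.pderiv 1)
    have h₂ := ih (hF.pderiv 1) (hG.pderiv 0)
    have hFG := cayleyOmega_sum_X_mul_pderiv q F hG
    have hGF := cayleyOmega_sum_pderiv_X_mul q hF G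
    have h_pred : (q * (m + n + 1 - q)) •
        (Ω (q - 1) (pderiv 0 F) (pderiv 1 G) - Ω (q - 1) (pderiv 1 F) (pderiv 0 G)) =
          (q * (m + n + 1 - q)) • Ω q F G := by
      cases q with
      | zero => simp
      | succ q => rw [Nat.add_sub_cancel, ← cayleyOmega_succ]
    have hG' := congrArg (Ω q F) (hasEulerDegree_fin_two.1 hG)
    have hF' := congrArg (fun P => Ω q P G) (hasEulerDegree_fin_two.1 hF)
    simp only [Fin.sum_univ_two, cayleyOmega_succ, pderiv_X_self_mul, pderiv_X_mul_of_ne, ne_eq,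
      zero_ne_one, one_ne_zero, not_false_eq_true, map_add, map_smul, LinearMap.add_apply,
      LinearMap.smul_apply, Nat.add_sub_cancel] at *
    push_cast
    linear_combination (norm := module) h₁ - h₂ + h_pred + hF' + hG'

/-- The variables rotated by a quarter turn, `(x₂, -x₁)`. -/
noncomputable def perp : Fin 2 → MvPolynomial (Fin 2) R := ![X 1, -X 0]

lemma perp_mul_cayleyOmega_succ {a b : R} (i : Fin 2) (p : ℕ) {A B : MvPolynomial (Fin 2) R}
    (hA : HasEulerDegree a A) (hB : HasEulerDegree b B) :
    perp i * Ω (p + 1) A B = (b - p) • Ω p (pderiv i A) B - (a - p) • Ω p A (pderiv i B) := by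
  induction p generalizing A B a b with
  | zero =>
    simp only [hasEulerDegree_fin_two, cayleyOmega_succ, cayleyOmega_zero, smul_eq_C_mul,
      Nat.cast_zero, sub_zero] at *
    fin_cases i
    · simp only [perp, Fin.zero_eta, Matrix.cons_val_zero]
      linear_combination pderiv 0 A * hB - pderiv 0 B * hA
    · simp only [perp, Fin.mk_one, Matrix.cons_val_one, Matrix.cons_val_fin_one]
      linear_combination pderiv 1 A * hB - pderiv 1 B * hA
  | succ p ih =>
    rw [cayleyOmega_succ (p + 1), mul_sub, ih (hA.pderiv 0) (hB.pderiv 1),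
      ih (hA.pderiv 1) (hB.pderiv 0)]
    simp only [cayleyOmega_succ, pderiv_comm i]
    push_cast
    module

lemma cayleyOmega_pderiv_left {a b : R} (i : Fin 2) (p : ℕ) {A B : MvPolynomial (Fin 2) R}
    (hA : HasEulerDegree a A) (hB : HasEulerDegree b B) :
    (a + b - 2 * p) • Ω p (pderiv i A) B =
      (a - p) • pderiv i (Ω p A B) + perp i * Ω (p + 1) A B := by
  rw [perp_mul_cayleyOmega_succ i p hA hB, pderiv_cayleyOmega]
  module

lemma cayleyOmega_pderiv_right {a b : R} (i : Fin 2) (p : ℕ) {A B : MvPolynomial (Fin 2) R}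
    (hA : HasEulerDegree a A) (hB : HasEulerDegree b B) :
    (a + b - 2 * p) • Ω p A (pderiv i B) =
      (b - p) • pderiv i (Ω p A B) - perp i * Ω (p + 1) A B := by
  rw [perp_mul_cayleyOmega_succ i p hA hB, pderiv_cayleyOmega]
  module

/-- With `m = N - p - q`, this is the term of index `(p, q)` in the expansion of
`(A, C)₁ (B, D)_N` (up to normalisation). -/
lemma cayleyOmega_pderiv_cayleyOmega_pderiv {a b c d : R} (m p q : ℕ)
    {A B C D : MvPolynomial (Fin 2) R} (hA : HasEulerDegree a A) (hB : HasEulerDegree b B)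
    (hC : HasEulerDegree c C) (hD : HasEulerDegree d D) :
    ((a + b - 2 * p) * (c + d - 2 * q)) •
      (Ω m (Ω p (pderiv 0 A) B) (Ω q (pderiv 1 C) D) -
        Ω m (Ω p (pderiv 1 A) B) (Ω q (pderiv 0 C) D)) =
      ((a - p) * (c - q)) • Ω (m + 1) (Ω p A B) (Ω q C D) -
        ((a - p) * (a + b - 2 * p - m)) • Ω m (Ω p A B) (Ω (q + 1) C D) +
        ((c - q) * (c + d - 2 * q - m)) • Ω m (Ω (p + 1) A B) (Ω q C D) +
        (m * (a + b + c + d - 2 * p - 2 * q - 1 - m)) •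
          Ω (m - 1) (Ω (p + 1) A B) (Ω (q + 1) C D) := by
  have h₁ := congrArg₂ (fun P Q => Ω m P Q) (cayleyOmega_pderiv_left 0 p hA hB)
    (cayleyOmega_pderiv_left 1 q hC hD)
  have h₂ := congrArg₂ (fun P Q => Ω m P Q) (cayleyOmega_pderiv_left 1 p hA hB)
    (cayleyOmega_pderiv_left 0 q hC hD)
  have hl := cayleyOmega_sum_pderiv_X_mul m (hA.cayleyOmega p hB) (Ω (q + 1) C D)
  have hr := cayleyOmega_sum_X_mul_pderiv m (Ω (p + 1) A B) (hC.cayleyOmega q hD)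
  have hbr := cayleyOmega_bracket m (hA.cayleyOmega (p + 1) hB) (hC.cayleyOmega (q + 1) hD)
  simp only [perp, Matrix.cons_val_zero, Matrix.cons_val_one, neg_mul, Fin.sum_univ_two, map_add,
    map_neg, map_smul, LinearMap.add_apply, LinearMap.neg_apply, LinearMap.smul_apply] at *
  rw [cayleyOmega_succ m]
  push_cast at *
  linear_combination (norm := module) h₁ - h₂ - (a - p) • hl + (c - q) • hr + hbr

end Cayley

/-! ### Gordan's series -/

section Gordan

/-- The falling factorial `x (x - 1) ⋯ (x - n + 1)` of a scalar. -/
noncomputable def falling {R : Type*} [Ring R] (x : R) (n : ℕ) : R :=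
  (descPochhammer R n).eval x

section Falling

variable {R : Type*}

section Ring

variable [Ring R]

lemma falling_zero (x : R) : falling x 0 = 1 := by
  simp [falling]

lemma falling_succ (x : R) (n : ℕ) : falling x (n + 1) = falling x n * (x - n) :=
  descPochhammer_succ_eval n x

lemma falling_natCast (m n : ℕ) : falling (m : R) n = m.descFactorial n :=
  descPochhammer_eval_eq_descFactorial R m n

end Ring

variable [CommRing R]

lemma falling_add (x : R) (m n : ℕ) : falling x (m + n) = falling x m * falling (x - m) n := by
  simp [falling, ← descPochhammer_mul]

lemma falling_succ_left (x : R) (n : ℕ) : falling x (n + 1) = x * falling (x - 1) n := by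
  rw [add_comm, falling_add, falling_succ, falling_zero, Nat.cast_zero, Nat.cast_one, sub_zero,
    one_mul]

lemma falling_mul_sub (x : R) (n : ℕ) : falling x n * (x - n) = x * falling (x - 1) n := by
  rw [← falling_succ, falling_succ_left]

end Falling

variable {k : Type*} [Field k]

/-- The part of Gordan's coefficient that depends on the orders. -/
noncomputable def gordanWeight (s b g : k) (p m : ℕ) : k :=
  falling (g - m) p * falling (b - p) m / (falling (s + 1 - p) p * falling (s - 2 * p) m)

/-- The coefficient of `((A, B)_p, G)_m` in Gordan's series for `A (B, G)_{p + m}`, where `B` and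
`G` have orders `b` and `g`, and `A B` has order `s`. -/
noncomputable def gordanCoeff (s b g : k) (p m : ℕ) : k :=
  (-1) ^ p * (p + m).choose p * gordanWeight s b g p m

lemma gordanCoeff_zero_succ (s b g : k) (m : ℕ) :
    gordanCoeff s b g 0 (m + 1) = b / s * gordanCoeff (s - 1) (b - 1) (g - 1) 0 m := by
  simp only [gordanCoeff, gordanWeight, falling_zero, Nat.choose_zero_right, Nat.cast_zero,
    sub_zero, mul_zero, falling_succ_left]
  field_simp

lemma gordanCoeff_succ_zero (s b g : k) (p : ℕ) :
    gordanCoeff s b g (p + 1) 0 =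
      -(g / (s - 2 * p) * gordanCoeff (s - 1) (b - 1) (g - 1) p 0) := by
  have h_den : falling (s - p) (p + 1) = falling (s - p) p * (s - 2 * p) := by
    rw [falling_succ]; ring
  simp only [gordanCoeff, gordanWeight, add_zero, falling_zero, Nat.choose_self, Nat.cast_add,
    Nat.cast_one, Nat.cast_zero, sub_zero, sub_add_cancel, add_sub_add_right_eq_sub, h_den,
    falling_succ_left g]
  field_simp
  ring

lemma mul_gordanWeight_succ_left {s : k} (b g : k) {p : ℕ} (m : ℕ) (h : s ≠ p) :
    (b - 1 - p) / (s - 2 - 2 * p) * gordanWeight (s - 1) (b - 1) (g - 1) (p + 1) m =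
      (s - p) / (s - 1 - 2 * p) * gordanWeight s b g (p + 1) (m + 1) := by
  have h₀ : s - p ≠ 0 := sub_ne_zero.2 h
  rw [gordanWeight, gordanWeight, falling_succ (s - 1 + 1 - (p + 1 : ℕ)),
    falling_succ_left (s + 1 - (p + 1 : ℕ)), falling_succ_left (b - (p + 1 : ℕ)),
    falling_succ_left (s - 2 * (p + 1 : ℕ))]
  push_cast
  rw [show b - 1 - (p + 1) = b - (p + 1) - 1 by ring, show g - 1 - m = g - (m + 1) by ring,
    show s + 1 - (p + 1) = s - p by ring, show s - 1 + 1 - (p + 1) = s - p - 1 by ring,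
    show s - 1 - 2 * (p + 1) = s - 2 * (p + 1) - 1 by ring,
    show s - p - 1 - p = s - 1 - 2 * p by ring, show s - 2 - 2 * p = s - 2 * (p + 1) by ring,
    show b - 1 - p = b - (p + 1) by ring]
  field_simp

lemma mul_gordanWeight_succ_right {s : k} (b g : k) {p m : ℕ} (h₀ : s ≠ p) (h₁ : s ≠ 2 * p)
    (h₂ : s ≠ 2 * p + 2) (h₃ : s ≠ 2 * p + 2 + m) :
    (g - 1 - m) / (s - 2 * p) * gordanWeight (s - 1) (b - 1) (g - 1) p (m + 1) =
      (s - 2 - 2 * p - m) / (s - 1 - 2 * p) * gordanWeight s b g (p + 1) (m + 1) := by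
  have h₀' : s - p ≠ 0 := sub_ne_zero.2 h₀
  have h₁' : s - 2 * p ≠ 0 := sub_ne_zero.2 h₁
  have h₂' : s - 2 * (p + 1) ≠ 0 := sub_ne_zero.2 (by rwa [mul_add, mul_one])
  have h₃' : s - 2 * (p + 1) - m ≠ 0 := by rwa [sub_sub, sub_ne_zero, mul_add, mul_one]
  have h_falling₁ : falling (s - p) p = (s - p) * falling (s - p - 1) p / (s - 2 * p) := by
    rw [eq_div_iff h₁', ← falling_mul_sub]; ring
  have h_falling₂ : falling (s - 2 * (p + 1)) m =
      (s - 2 * (p + 1)) * falling (s - 2 * (p + 1) - 1) m / (s - 2 * (p + 1) - m) := by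
    rw [eq_div_iff h₃', falling_mul_sub]
  rw [gordanWeight, gordanWeight, falling_succ_left (s - 1 - 2 * p),
    falling_succ_left (g - (m + 1 : ℕ)), falling_succ_left (s + 1 - (p + 1 : ℕ)),
    falling_succ_left (s - 2 * (p + 1 : ℕ))]
  push_cast
  rw [show g - 1 - (m + 1) = g - (m + 1) - 1 by ring, show b - 1 - p = b - (p + 1) by ring,
    show s + 1 - (p + 1) = s - p by ring, show s - 1 + 1 - p = s - p by ring,
    show s - 1 - 2 * p - 1 = s - 2 * (p + 1) by ring, show g - 1 - m = g - (m + 1) by ring,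
    show s - 2 - 2 * p = s - 2 * (p + 1) by ring, h_falling₁, h_falling₂]
  field_simp

lemma choose_add_succ_mul (p m : ℕ) :
    (p + 1 + m).choose (p + 1) * (p + 1) = (p + (m + 1)).choose p * (m + 1) := by
  rw [add_right_comm p 1 m, add_assoc, Nat.choose_succ_right_eq, Nat.add_sub_cancel_left]

lemma gordanCoeff_succ_succ {s : k} (b g : k) {p m : ℕ} (h : ∀ i ≤ 2 * (p + m) + 2, s ≠ i) :
    gordanCoeff s b g (p + 1) (m + 1) =
      (b - 1 - p) / (s - 2 - 2 * p) * gordanCoeff (s - 1) (b - 1) (g - 1) (p + 1) m -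
        (g - 1 - m) / (s - 2 * p) * gordanCoeff (s - 1) (b - 1) (g - 1) p (m + 1) := by
  have h_pascal : ((p + 1 + (m + 1)).choose (p + 1) : k) =
      (p + (m + 1)).choose p + (p + 1 + m).choose (p + 1) := by
    rw [show p + 1 + (m + 1) = p + (m + 1) + 1 by ring, show p + 1 + m = p + (m + 1) by ring,
      ← Nat.cast_add, ← Nat.choose_succ_succ']
  have h_choose : ((p + 1 + m).choose (p + 1) : k) * (p + 1) =
      (p + (m + 1)).choose p * (m + 1) := by
    exact_mod_cast congrArg (Nat.cast (R := k)) (choose_add_succ_mul p m)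
  have h_left := mul_gordanWeight_succ_left b g m (h p (by omega))
  have h_right := mul_gordanWeight_succ_right b g (m := m) (h p (by omega))
    (by exact_mod_cast h (2 * p) (by omega)) (by exact_mod_cast h (2 * p + 2) (by omega))
    (by exact_mod_cast h (2 * p + 2 + m) (by omega))
  have h_ne : s - 1 - 2 * p ≠ 0 := by
    have := sub_ne_zero.2 (h (2 * p + 1) (by omega))
    contrapose! this
    rw [← this]; push_cast; ring
  have h_split : ((p + 1 + (m + 1)).choose (p + 1) : k) =
      (p + 1 + m).choose (p + 1) * ((s - p) / (s - 1 - 2 * p)) +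
        (p + (m + 1)).choose p * ((s - 2 - 2 * p - m) / (s - 1 - 2 * p)) := by
    rw [h_pascal, mul_div, mul_div, ← add_div, eq_div_iff h_ne]
    linear_combination -h_choose
  rw [gordanCoeff, gordanCoeff, gordanCoeff, h_split]
  linear_combination (-1) ^ p *
    ((p + 1 + m).choose (p + 1) * h_left + (p + (m + 1)).choose p * h_right)

lemma sum_antidiagonal_succ_eq_of_recurrence {M : Type*} [AddCommMonoid M] (n : ℕ)
    {f g h : ℕ × ℕ → M} (h_left : f (0, n + 1) = g (0, n)) (h_right : f (n + 1, 0) = h (n, 0))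
    (h_inner : ∀ p m, p + m + 1 = n → f (p + 1, m + 1) = g (p + 1, m) + h (p, m + 1)) :
    ∑ x ∈ antidiagonal (n + 1), f x = ∑ x ∈ antidiagonal n, (g x + h x) := by
  cases n with
  | zero => simp [Nat.sum_antidiagonal_succ, h_left, h_right]
  | succ n =>
    have h_sum : ∑ x ∈ antidiagonal n, f (x.1 + 1, x.2 + 1) =
        ∑ x ∈ antidiagonal n, (g (x.1 + 1, x.2) + h (x.1, x.2 + 1)) :=
      sum_congr rfl fun x hx => h_inner _ _ (by rw [mem_antidiagonal.1 hx])
    rw [Nat.sum_antidiagonal_succ, Nat.sum_antidiagonal_succ', sum_add_distrib,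
      Nat.sum_antidiagonal_succ, Nat.sum_antidiagonal_succ', h_sum, sum_add_distrib, h_left,
      h_right]
    abel

lemma cayleyOmega_cayleyOmega_pderiv {a b g : k} {p : ℕ} (m : ℕ) (h : a + b ≠ 2 * p)
    {A B G : MvPolynomial (Fin 2) k} (hA : HasEulerDegree a A) (hB : HasEulerDegree b B)
    (hG : HasEulerDegree g G) :
    Ω m (Ω p A (pderiv 0 B)) (pderiv 1 G) -
        Ω m (Ω p A (pderiv 1 B)) (pderiv 0 G) =
      ((b - p) / (a + b - 2 * p)) • Ω (m + 1) (Ω p A B) G -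
        ((g - m) / (a + b - 2 * p)) • Ω m (Ω (p + 1) A B) G := by
  have h_ne : a + b - 2 * p ≠ 0 := sub_ne_zero.2 h
  have h₀ := congrArg (fun P => Ω m P (pderiv 1 G)) (cayleyOmega_pderiv_right 0 p hA hB)
  have h₁ := congrArg (fun P => Ω m P (pderiv 0 G)) (cayleyOmega_pderiv_right 1 p hA hB)
  have h_euler := cayleyOmega_sum_X_mul_pderiv m (Ω (p + 1) A B) hG
  simp only [perp, Matrix.cons_val_zero, Matrix.cons_val_one, neg_mul, Fin.sum_univ_two, map_sub,
    map_neg, map_smul, LinearMap.sub_apply, LinearMap.neg_apply, LinearMap.smul_apply] at *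
  refine smul_right_injective _ h_ne ?_
  simp only [smul_sub, smul_smul, mul_div_cancel₀ _ h_ne]
  rw [cayleyOmega_succ m]
  linear_combination (norm := module) h₀ - h₁ - h_euler

theorem mul_cayleyOmega {a b g : k} {n : ℕ} (h : ∀ i, i + 1 < 2 * n → a + b ≠ i)
    {A B G : MvPolynomial (Fin 2) k} (hA : HasEulerDegree a A) (hB : HasEulerDegree b B)
    (hG : HasEulerDegree g G) :
    A * Ω n B G = ∑ x ∈ antidiagonal n,
      gordanCoeff (a + b) b g x.1 x.2 • Ω x.2 (Ω x.1 A B) G := by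
  induction n generalizing B G b g with
  | zero => simp [gordanCoeff, gordanWeight, falling_zero, cayleyOmega_zero, mul_assoc]
  | succ n ih =>
    have h_pred (i : ℕ) (hi : i + 1 < 2 * n) : a + (b - 1) ≠ i := by
      have := h (i + 1) (by omega)
      contrapose! this
      push_cast
      linear_combination this
    rw [cayleyOmega_succ, mul_sub, ih h_pred (hB.pderiv 0) (hG.pderiv 1),
      ih h_pred (hB.pderiv 1) (hG.pderiv 0), ← sum_sub_distrib]
    symm
    trans ∑ x ∈ antidiagonal n, (
      (gordanCoeff (a + b - 1) (b - 1) (g - 1) x.1 x.2 * ((b - x.1) / (a + b - 2 * x.1))) •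
        Ω (x.2 + 1) (Ω x.1 A B) G +
      (-gordanCoeff (a + b - 1) (b - 1) (g - 1) x.1 x.2 * ((g - x.2) / (a + b - 2 * x.1))) •
        Ω x.2 (Ω (x.1 + 1) A B) G)
    · refine sum_antidiagonal_succ_eq_of_recurrence n ?_ ?_ fun p m hpm => ?_
      · rw [gordanCoeff_zero_succ]
        simp [mul_comm]
      · rw [gordanCoeff_succ_zero]
        simp [mul_comm]
      · rw [gordanCoeff_succ_succ b g fun i hi => h i (by omega)]
        push_cast
        rw [← add_smul]
        ring_nf
    · refine sum_congr rfl fun x hx => ?_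
      have h_ne : a + b ≠ 2 * x.1 := by
        have := mem_antidiagonal.1 hx
        exact_mod_cast h (2 * x.1) (by omega)
      rw [← smul_sub, cayleyOmega_cayleyOmega_pderiv x.2 h_ne hA hB hG, add_sub_assoc]
      module

end Gordan

/-! ### The expansion of a product of two transvectants -/

section Product

variable {k : Type*} [Field k]

/-- The coefficient of `((A, B)_p, (C, D)_q)_{N - p - q}` in the iterated Gordan series of
`A C (B, D)_N`, up to the factor `(2 d - 2 p) (2 d - 2 q)`, where `A` and `C` have order `d - 1`
and `B` and `D` have order `d`. It vanishes if `N < p + q`. -/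
noncomputable def seriesCoeff (k : Type*) [Field k] (d N p q : ℕ) : k :=
  (-1) ^ p * (N.choose (p + q) * (p + q).choose p) *
    (falling ((d : k) - p) (N - p) * falling ((d : k) - q) (N - q)) /
    (falling (2 * (d : k) - p) (N + 1 - q) * falling (2 * (d : k) - q) (N + 1 - p))

lemma seriesCoeff_eq_zero_of_lt (d : ℕ) {N p q : ℕ} (h : N < p + q) :
    seriesCoeff k d N p q = 0 := by
  rw [seriesCoeff, Nat.choose_eq_zero_of_lt h, Nat.cast_zero, zero_mul, mul_zero, zero_mul,
    zero_div]

lemma falling_two_mul_sub {R : Type*} [CommRing R] (x : R) (p m : ℕ) :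
    falling (2 * x - p) (p + m + 1) =
      falling (2 * x - p) p * ((2 * x - 2 * p) * falling (2 * x - 1 - 2 * p) m) := by
  rw [add_assoc, falling_add, falling_succ_left]
  ring_nf

lemma falling_ne_zero_of_le [CharZero k] {x : k} {m n : ℕ} (hx : x = m) (h : n ≤ m) :
    falling x n ≠ 0 := by
  rw [hx, falling_natCast, Nat.cast_ne_zero, ne_eq, Nat.descFactorial_eq_zero_iff_lt]
  omega

lemma two_mul_sub_two_mul_ne_zero [CharZero k] {p d : ℕ} (h : p < d) :
    (2 * d - 2 * p : k) ≠ 0 := by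
  rw [sub_ne_zero]
  exact_mod_cast show 2 * d ≠ 2 * p by omega

lemma gordanCoeff_mul_gordanCoeff [CharZero k] {d p q m : ℕ} (hp : p < d) (hq : q < d)
    (hN : p + q + m ≤ d) :
    gordanCoeff (2 * d - 1 : k) d d p (q + m) *
      ((-1) ^ q * gordanCoeff (2 * d - 1 : k) d (2 * d - 1 - 2 * p) q m) =
    (2 * d - 2 * p) * (2 * d - 2 * q) * seriesCoeff k d (p + q + m) p q := by
  have h_cancel : falling (2 * d - 1 - 2 * p - m : k) q ≠ 0 :=
    falling_ne_zero_of_le (m := 2 * d - 1 - 2 * p - m)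
      (by rw [Nat.cast_sub (by omega), Nat.cast_sub (by omega), Nat.cast_sub (by omega)]
          push_cast; rfl)
      (by omega)
  have h_sign : (-1 : k) ^ q * (-1) ^ q = 1 := by rw [← mul_pow, neg_one_mul, neg_neg, one_pow]
  have h_den : falling (2 * d - 1 - 2 * p : k) (q + m) =
      falling (2 * d - 1 - 2 * p : k) m * falling (2 * d - 1 - 2 * p - m : k) q := by
    rw [add_comm, falling_add]
  have h_num : falling (d - q : k) (p + m) =
      falling (d - q : k) m * falling (d - (q + m : ℕ) : k) p := by
    rw [add_comm, falling_add, Nat.cast_add, sub_sub]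
  have h_choose : ((p + q + m).choose (p + q) * (p + q).choose p : k) =
      (p + q + m).choose p * (q + m).choose q := by
    rw [← Nat.cast_mul, Nat.choose_mul (Nat.le_add_right p q), Nat.add_sub_cancel_left,
      show p + q + m - p = q + m by omega, Nat.cast_mul]
  rw [gordanCoeff, gordanCoeff, gordanWeight, gordanWeight, seriesCoeff, h_choose,
    show p + q + m + 1 - q = p + m + 1 by omega, show p + q + m + 1 - p = q + m + 1 by omega,
    show p + q + m - q = p + m by omega, show p + q + m - p = q + m by omega,
    show p + (q + m) = p + q + m by ring, falling_two_mul_sub, falling_two_mul_sub, h_den, h_num,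
    sub_add_cancel, mul_comm (falling (2 * d - 1 - 2 * p : k) m), ← mul_assoc ((-1) ^ q),
    ← mul_assoc ((-1) ^ q), h_sign]
  trans (-1) ^ p * ((p + q + m).choose p * (q + m).choose q) *
    (falling (d - p : k) (q + m) * (falling (d - q : k) m * falling (d - (q + m : ℕ) : k) p)) /
    (falling (2 * d - p : k) p * falling (2 * d - 1 - 2 * p : k) m *
      (falling (2 * d - q : k) q * falling (2 * d - 1 - 2 * q : k) m))
  · refine Eq.trans ?_ (mul_div_mul_left _ _ h_cancel)
    ring
  · refine (mul_div_mul_left _ _ (mul_ne_zero (two_mul_sub_two_mul_ne_zero hp)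
      (two_mul_sub_two_mul_ne_zero hq))).symm.trans ?_
    ring

lemma mul_mul_cayleyOmega_antidiagonal [CharZero k] {d N : ℕ} (hd : 0 < d) (hN : N ≤ d)
    {A B C D : MvPolynomial (Fin 2) k} (hA : A.IsHomogeneous (d - 1)) (hB : B.IsHomogeneous d)
    (hC : C.IsHomogeneous (d - 1)) (hD : D.IsHomogeneous d) :
    A * C * Ω N B D = ∑ x ∈ antidiagonal N, ∑ y ∈ antidiagonal x.2,
      ((2 * d - 2 * x.1) * (2 * d - 2 * y.1) * seriesCoeff k d N x.1 y.1 : k) •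
        Ω (N - x.1 - y.1) (Ω x.1 A B) (Ω y.1 C D) := by
  have h_ne (i : ℕ) (hi : i + 1 < 2 * N) : ((d - 1 : ℕ) + d : k) ≠ i := by
    exact_mod_cast show d - 1 + d ≠ i by omega
  have hA' := hasEulerDegree_of_isHomogeneous hA
  have hB' := hasEulerDegree_of_isHomogeneous hB
  have hC' := hasEulerDegree_of_isHomogeneous hC
  have hD' := hasEulerDegree_of_isHomogeneous hD
  rw [mul_comm A, mul_assoc, mul_cayleyOmega h_ne hA' hB' hD', mul_sum]
  refine sum_congr rfl fun ⟨p, l⟩ hx => ?_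
  rw [mul_smul_comm, cayleyOmega_swap l D, mul_smul_comm,
    mul_cayleyOmega (fun i hi => h_ne i (by have := mem_antidiagonal.1 hx; omega)) hC' hD'
      (hA'.cayleyOmega p hB'), smul_sum, smul_sum]
  refine sum_congr rfl fun ⟨q, m⟩ hy => ?_
  obtain rfl : p + l = N := mem_antidiagonal.1 hx
  obtain rfl : q + m = l := mem_antidiagonal.1 hy
  rw [cayleyOmega_swap m (Ω p A B), show p + (q + m) - p - q = m by omega]
  rcases lt_or_ge p d with hp | hp
  · rcases lt_or_ge q d with hq | hq
    · have h_coeff := gordanCoeff_mul_gordanCoeff (k := k) hp hq (m := m) (by omega)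
      have h_sign : (-1 : k) ^ m * (-1) ^ m = 1 := by simp [← mul_pow]
      rw [← add_assoc, ← h_coeff, Nat.cast_pred hd, show (d - 1 + d : k) = 2 * d - 1 by ring]
      simp only [smul_smul, pow_add]
      congr 1
      linear_combination gordanCoeff (2 * d - 1 : k) d d p (q + m) * (-1) ^ q *
        gordanCoeff (2 * d - 1 : k) d (2 * d - 1 - 2 * p) q m * h_sign
    · simp [cayleyOmega_eq_zero_of_lt (show d - 1 < q by omega) hC]
  · simp [cayleyOmega_eq_zero_of_lt (show d - 1 < p by omega) hA]

lemma sum_antidiagonal_antidiagonal_eq_sum_range {M : Type*} [AddCommMonoid M] {N : ℕ}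
    {f : ℕ → ℕ → M} (hf : ∀ p q, N < p + q → f p q = 0) :
    ∑ x ∈ antidiagonal N, ∑ y ∈ antidiagonal x.2, f x.1 y.1 =
      ∑ p ∈ range (N + 1), ∑ q ∈ range (N + 1), f p q := by
  rw [Nat.sum_antidiagonal_eq_sum_range_succ_mk]
  refine sum_congr rfl fun p _ => ?_
  rw [Nat.sum_antidiagonal_eq_sum_range_succ_mk]
  refine sum_subset (range_mono (by simp)) fun q _ hq => hf p q ?_
  simp only [Nat.succ_eq_add_one, mem_range] at hq
  omega

lemma mul_mul_cayleyOmega [CharZero k] {d N : ℕ} (hd : 0 < d) (hN : N ≤ d)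
    {A B C D : MvPolynomial (Fin 2) k} (hA : A.IsHomogeneous (d - 1)) (hB : B.IsHomogeneous d)
    (hC : C.IsHomogeneous (d - 1)) (hD : D.IsHomogeneous d) :
    A * C * Ω N B D = ∑ p ∈ range (N + 1), ∑ q ∈ range (N + 1),
      ((2 * d - 2 * p) * (2 * d - 2 * q) * seriesCoeff k d N p q : k) •
        Ω (N - p - q) (Ω p A B) (Ω q C D) := by
  rw [mul_mul_cayleyOmega_antidiagonal hd hN hA hB hC hD,
    ← sum_antidiagonal_antidiagonal_eq_sum_range fun p q h => ?_]
  rw [seriesCoeff_eq_zero_of_lt d h, mul_zero, zero_smul]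

/-- The expansion of `(A, C)₁ (B, D)_N`, for forms of order `d`, as a linear combination of the
values `V p q = ((A, B)_p, (C, D)_q)_{N + 1 - p - q}`. -/
noncomputable def productSeries (k : Type*) [Field k] {M : Type*} [AddCommGroup M] [Module k M]
    (d N : ℕ) : (ℕ → ℕ → M) →ₗ[k] M :=
  let eval (p q : ℕ) : (ℕ → ℕ → M) →ₗ[k] M := LinearMap.proj q ∘ₗ LinearMap.proj p
  ∑ p ∈ range (N + 1), ∑ q ∈ range (N + 1), seriesCoeff k d N p q •
    (((d - p) * (d - q) : k) • eval p q - ((d - p) * (2 * d - p + q - N) : k) • eval p (q + 1) +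
      ((d - q) * (2 * d - q + p - N) : k) • eval (p + 1) q +
      ((N - p - q) * (4 * d - p - q - N - 1) : k) • eval (p + 1) (q + 1))

lemma cayleyOmega_one_mul_cayleyOmega [CharZero k] {d N : ℕ} (hd : 0 < d) (hN : N ≤ d)
    {A B C D : MvPolynomial (Fin 2) k} (hA : A.IsHomogeneous d) (hB : B.IsHomogeneous d)
    (hC : C.IsHomogeneous d) (hD : D.IsHomogeneous d) :
    Ω 1 A C * Ω N B D = productSeries k d N fun p q =>
      Ω (N + 1 - p - q) (Ω p A B) (Ω q C D) := by
  rw [cayleyOmega_succ, cayleyOmega_zero, cayleyOmega_zero, sub_mul,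
    mul_mul_cayleyOmega hd hN hA.pderiv hB hC.pderiv hD,
    mul_mul_cayleyOmega hd hN hA.pderiv hB hC.pderiv hD, ← sum_sub_distrib]
  simp only [productSeries, LinearMap.sum_apply, LinearMap.smul_apply]
  refine sum_congr rfl fun p _ => ?_
  rw [← sum_sub_distrib]
  refine sum_congr rfl fun q _ => ?_
  rcases lt_or_ge N (p + q) with h | h
  · simp [seriesCoeff_eq_zero_of_lt d h]
  · obtain ⟨m, rfl⟩ := Nat.exists_eq_add_of_le h
    have h_step := cayleyOmega_pderiv_cayleyOmega_pderiv m p q (hasEulerDegree_of_isHomogeneous hA)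
      (hasEulerDegree_of_isHomogeneous hB) (hasEulerDegree_of_isHomogeneous hC)
      (hasEulerDegree_of_isHomogeneous hD)
    simp only [LinearMap.add_apply, LinearMap.sub_apply, LinearMap.smul_apply,
      LinearMap.comp_apply, LinearMap.proj_apply, show p + q + m - p - q = m by omega,
      show p + q + m + 1 - p - q = m + 1 by omega,
      show p + q + m + 1 - p - (q + 1) = m by omega,
      show p + q + m + 1 - (p + 1) - q = m by omega,
      show p + q + m + 1 - (p + 1) - (q + 1) = m - 1 by omega]
    push_cast
    linear_combination (norm := module) seriesCoeff k d (p + q + m) p q • h_step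

lemma two_smul_cayleyOmega_one_mul_cayleyOmega [CharZero k] {d N : ℕ} (hN_odd : Odd N)
    (hN : N ≤ d) {A B : MvPolynomial (Fin 2) k} (hA : A.IsHomogeneous d) (hB : B.IsHomogeneous d) :
    (2 : k) • (Ω 1 A B * Ω N A B) = productSeries k d N fun p q =>
      ((1 - (-1) ^ p) * (1 - (-1) ^ q) : k) •
        Ω (N + 1 - p - q) (Ω p A B) (Ω q A B) := by
  have hd : 0 < d := hN_odd.pos.trans_le hN
  have h_self (F : MvPolynomial (Fin 2) k) : Ω 1 F F = 0 := by
    rw [cayleyOmega_succ, cayleyOmega_zero, cayleyOmega_zero, mul_comm, sub_self]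
  have h_sum : (fun p q => ((1 - (-1) ^ p) * (1 - (-1) ^ q) : k) •
        Ω (N + 1 - p - q) (Ω p A B) (Ω q A B)) =
      (fun p q => Ω (N + 1 - p - q) (Ω p A B) (Ω q A B)) -
        (fun p q => Ω (N + 1 - p - q) (Ω p A B) (Ω q B A)) -
        (fun p q => Ω (N + 1 - p - q) (Ω p B A) (Ω q A B)) +
        (fun p q => Ω (N + 1 - p - q) (Ω p B A) (Ω q B A)) := by
    funext p q
    simp only [Pi.add_apply, Pi.sub_apply, cayleyOmega_swap _ A B, map_smul, LinearMap.smul_apply]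
    module
  rw [h_sum, map_add, map_sub, map_sub,
    ← cayleyOmega_one_mul_cayleyOmega hd hN hA hB hA hB,
    ← cayleyOmega_one_mul_cayleyOmega hd hN hA hB hB hA,
    ← cayleyOmega_one_mul_cayleyOmega hd hN hB hA hA hB,
    ← cayleyOmega_one_mul_cayleyOmega hd hN hB hA hB hA, h_self, h_self, cayleyOmega_swap N A B,
    cayleyOmega_swap 1 A B, hN_odd.neg_one_pow, two_smul]
  simp

/-- The coefficient of `V (p + 1) (q + 1)` in `productSeries k d N V`. -/
noncomputable def productCoeff (k : Type*) [Field k] (d N p q : ℕ) : k :=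
  (d - p - 1) * (d - q - 1) * seriesCoeff k d N (p + 1) (q + 1) -
    (d - p - 1) * (2 * d - p + q - N - 1) * seriesCoeff k d N (p + 1) q +
    (d - q - 1) * (2 * d - q + p - N - 1) * seriesCoeff k d N p (q + 1) +
    (N - p - q) * (4 * d - p - q - N - 1) * seriesCoeff k d N p q

lemma sum_range_add_one_eq_sum_range {M : Type*} [AddCommMonoid M] {n : ℕ} {f : ℕ → M}
    (h_zero : f 0 = 0) (h_last : f n = 0) : ∑ i ∈ range n, f (i + 1) = ∑ i ∈ range n, f i := by
  rw [← add_zero (∑ i ∈ range n, f (i + 1)), ← h_zero, ← sum_range_succ', sum_range_succ, h_last,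
    add_zero]

lemma productSeries_eq_sum {M : Type*} [AddCommGroup M] [Module k M] (d N : ℕ) {V : ℕ → ℕ → M}
    (h_left : ∀ q, V 0 q = 0) (h_right : ∀ p, V p 0 = 0) :
    productSeries k d N V = ∑ p ∈ range (N + 1), ∑ q ∈ range (N + 1),
      productCoeff k d N p q • V (p + 1) (q + 1) := by
  have h_last (q : ℕ) : seriesCoeff k d N (N + 1) q = 0 := seriesCoeff_eq_zero_of_lt d (by omega)
  have h_last' (p : ℕ) : seriesCoeff k d N p (N + 1) = 0 := seriesCoeff_eq_zero_of_lt d (by omega)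
  have h_shift_left (c : ℕ → ℕ → k) (W : ℕ → ℕ → M) (hW : ∀ q, W 0 q = 0)
      (hc : ∀ q, c (N + 1) q = 0) :
      ∑ p ∈ range (N + 1), ∑ q ∈ range (N + 1), c p q • W p q =
        ∑ p ∈ range (N + 1), ∑ q ∈ range (N + 1), c (p + 1) q • W (p + 1) q :=
    (sum_range_add_one_eq_sum_range (f := fun p => ∑ q ∈ range (N + 1), c p q • W p q)
      (by simp [hW]) (by simp [hc])).symm
  have h_shift_right (c : ℕ → ℕ → k) (hc : ∀ p, c p (N + 1) = 0) :
      ∑ p ∈ range (N + 1), ∑ q ∈ range (N + 1), c p q • V (p + 1) q =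
        ∑ p ∈ range (N + 1), ∑ q ∈ range (N + 1), c p (q + 1) • V (p + 1) (q + 1) :=
    sum_congr rfl fun p _ => (sum_range_add_one_eq_sum_range (f := fun q => c p q • V (p + 1) q)
      (by simp [h_right]) (by simp [hc])).symm
  simp only [productSeries, LinearMap.sum_apply, LinearMap.add_apply, LinearMap.sub_apply,
    LinearMap.smul_apply, LinearMap.comp_apply, LinearMap.proj_apply, sum_add_distrib,
    sum_sub_distrib, smul_add, smul_sub, smul_smul]
  rw [h_shift_left (fun p q => seriesCoeff k d N p q * ((d - p) * (d - q))) V h_left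
      (by simp [h_last]),
    h_shift_left (fun p q => seriesCoeff k d N p q * ((d - p) * (2 * d - p + q - N)))
      (fun p q => V p (q + 1)) (fun q => h_left (q + 1)) (by simp [h_last]),
    h_shift_right (fun p q => seriesCoeff k d N (p + 1) q * ((d - (p + 1 : ℕ)) * (d - q)))
      (by simp [h_last']),
    h_shift_right (fun p q => seriesCoeff k d N p q * ((d - q) * (2 * d - q + p - N)))
      (by simp [h_last'])]
  simp only [← sum_add_distrib, ← sum_sub_distrib]
  refine sum_congr rfl fun p _ => sum_congr rfl fun q _ => ?_
  rw [productCoeff]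
  push_cast
  module

end Product

/-! ### The coefficients of the expansion -/

section Coefficients

variable {k : Type*} [Field k]

lemma seriesCoeff_swap (d N p q : ℕ) :
    seriesCoeff k d N q p = (-1) ^ (p + q) * seriesCoeff k d N p q := by
  have h_sign : (-1 : k) ^ p * (-1) ^ p = 1 := by rw [← mul_pow, neg_one_mul, neg_neg, one_pow]
  rw [seriesCoeff, seriesCoeff, add_comm q p, ← Nat.choose_symm_add, pow_add]
  simp only [div_eq_mul_inv, mul_inv]
  linear_combination -((-1) ^ q * (N.choose (p + q) * (p + q).choose p : k) *
    (falling (d - p : k) (N - p) * falling (d - q : k) (N - q)) *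
    ((falling (2 * d - p : k) (N + 1 - q))⁻¹ * (falling (2 * d - q : k) (N + 1 - p))⁻¹)) * h_sign

lemma productCoeff_eq_zero_of_lt (d : ℕ) {N p q : ℕ} (h : N < p + q) :
    productCoeff k d N p q = 0 := by
  rw [productCoeff, seriesCoeff_eq_zero_of_lt d h, seriesCoeff_eq_zero_of_lt d (by omega),
    seriesCoeff_eq_zero_of_lt d (by omega), seriesCoeff_eq_zero_of_lt d (by omega)]
  ring

variable [CharZero k]

lemma falling_two_mul_sub_ne_zero {d p n : ℕ} (h : p + n ≤ 2 * d) :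
    falling (2 * d - p : k) n ≠ 0 :=
  falling_ne_zero_of_le (m := 2 * d - p) (by rw [Nat.cast_sub (by omega)]; push_cast; rfl)
    (by omega)

lemma natCast_add_one_mul_choose_mul_choose {R : Type*} [CommRing R] (N p q : ℕ) :
    ((p + 1) * (N.choose (p + 1 + q) * (p + 1 + q).choose (p + 1)) : R) =
      (N - p - q) * (N.choose (p + q) * (p + q).choose p) := by
  have h_left : (N.choose (p + q + 1) * (p + q + 1) : R) = N.choose (p + q) * (N - p - q) := by
    rcases le_or_gt (p + q) N with h | h
    · rw [sub_sub, ← Nat.cast_add, ← Nat.cast_sub h]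
      exact_mod_cast congrArg (Nat.cast (R := R)) (Nat.choose_succ_right_eq N (p + q))
    · simp [Nat.choose_eq_zero_of_lt h, Nat.choose_eq_zero_of_lt (h.trans (Nat.lt_succ_self _))]
  have h_right : ((p + q + 1) * (p + q).choose p : R) = (p + q + 1).choose (p + 1) * (p + 1) := by
    exact_mod_cast congrArg (Nat.cast (R := R)) (Nat.add_one_mul_choose_eq (p + q) p)
  rw [add_right_comm]
  linear_combination (p + q).choose p * h_left - N.choose (p + q + 1) * h_right

lemma mul_seriesCoeff_succ_left {d N p q : ℕ} (hN : N ≤ d) (hpq : p + q < N) (hp : p + 1 < d) :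
    (p + 1) * (d - p) * (2 * d - 1 + q - N - p) * seriesCoeff k d N (p + 1) q =
      -((N - p - q) * (2 * d - p) * (2 * d + p - N - q) * seriesCoeff k d N p q) := by
  obtain ⟨l, rfl⟩ : ∃ l, N = p + q + 1 + l := Nat.exists_eq_add_of_le hpq
  have h_choose := natCast_add_one_mul_choose_mul_choose (R := k) (p + q + 1 + l) p q
  have h_num := falling_succ_left (d - p : k) (q + l)
  have h_den := falling_mul_sub (2 * d - p : k) (p + l + 2)
  have h_den' := falling_succ (2 * d - q : k) (q + l + 1)
  have h_ne : falling (2 * d - p : k) (p + l + 2) ≠ 0 := falling_two_mul_sub_ne_zero (by omega)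
  have h_ne_left : falling (2 * d - p - 1 : k) (p + l + 2) ≠ 0 := by
    rw [sub_sub, ← Nat.cast_add_one]
    exact falling_two_mul_sub_ne_zero (by omega)
  have h_ne_right : falling (2 * d - q : k) (q + l + 1) * (2 * d - q - (q + l + 1 : ℕ)) ≠ 0 := by
    rw [← falling_succ]
    exact falling_two_mul_sub_ne_zero (by omega)
  rw [seriesCoeff, seriesCoeff, show p + q + 1 + l - (p + 1) = q + l by omega,
    show p + q + 1 + l - p = q + l + 1 by omega, show p + q + 1 + l - q = p + l + 1 by omega,
    show p + q + 1 + l + 1 - q = p + l + 2 by omega,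
    show p + q + 1 + l + 1 - p = q + l + 2 by omega,
    show p + q + 1 + l + 1 - (p + 1) = q + l + 1 by omega, h_num, h_den', Nat.cast_add_one,
    ← sub_sub, ← sub_sub]
  set C₀ := ((p + q + 1 + l).choose (p + q) * (p + q).choose p : k)
  set C₁ := ((p + q + 1 + l).choose (p + 1 + q) * (p + 1 + q).choose (p + 1) : k)
  set D₀ := falling (2 * d - p : k) (p + l + 2)
  set D₁ := falling (2 * d - p - 1 : k) (p + l + 2)
  set E := falling (2 * d - q : k) (q + l + 1)
  set F := falling (d - p - 1 : k) (q + l)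
  set G := falling (d - q : k) (p + l + 1)
  rw [mul_div_assoc', mul_div_assoc', ← neg_div,
    div_eq_div_iff (mul_ne_zero h_ne_left (left_ne_zero_of_mul h_ne_right))
      (mul_ne_zero h_ne h_ne_right)]
  push_cast at h_choose h_den ⊢
  linear_combination
    (-1) ^ (p + 1) * (d - p) * (2 * d - 2 - 2 * p - l) * (2 * d - 2 * q - 1 - l) *
      (D₀ * E * F * G) * h_choose -
    (-1) ^ p * (d - p) * (1 + l) * (2 * d - 2 * q - 1 - l) * C₀ * (E * F * G) * h_den

lemma mul_seriesCoeff_succ_right {d N p q : ℕ} (hN : N ≤ d) (hpq : p + q < N) (hq : q + 1 < d) :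
    (q + 1) * (d - q) * (2 * d - 1 + p - N - q) * seriesCoeff k d N p (q + 1) =
      (N - p - q) * (2 * d - q) * (2 * d + q - N - p) * seriesCoeff k d N p q := by
  have h_step := mul_seriesCoeff_succ_left (k := k) hN (by omega : q + p < N) hq
  have h_sign : (-1 : k) ^ (p + q) * (-1) ^ (p + q) = 1 := by
    rw [← mul_pow, neg_one_mul, neg_neg, one_pow]
  rw [seriesCoeff_swap d N p (q + 1), seriesCoeff_swap d N p q, ← add_assoc, pow_succ] at h_step
  linear_combination -(-1) ^ (p + q) * h_step - h_sign *
    ((q + 1) * (d - q) * (2 * d - 1 + p - N - q) * seriesCoeff k d N p (q + 1) -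
      (N - p - q) * (2 * d - q) * (2 * d + q - N - p) * seriesCoeff k d N p q)

lemma mul_seriesCoeff_succ_succ {d N p q : ℕ} (hN : N ≤ d) (hpq : p + q < N) :
    (p + 1) * (q + 1) * (d - p) * (d - q) * seriesCoeff k d N (p + 1) (q + 1) =
      -((N - p - q) * (N - p - q - 1) * (2 * d - p) * (2 * d - q) * seriesCoeff k d N p q) := by
  rcases hpq.nat_succ_le.eq_or_lt with h_eq | h_lt
  · rw [seriesCoeff_eq_zero_of_lt d (by omega), ← h_eq]
    push_cast
    ring
  · have h_left := mul_seriesCoeff_succ_left (k := k) hN hpq (by omega)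
    have h_right := mul_seriesCoeff_succ_right (k := k) hN (show p + 1 + q < N by omega) (by omega)
    have h_ne : (2 * d + p - N - q : k) ≠ 0 := by
      rw [sub_sub, sub_ne_zero]
      exact_mod_cast show 2 * d + p ≠ N + q by omega
    push_cast at h_right
    refine mul_left_cancel₀ h_ne ?_
    linear_combination (p + 1) * (d - p) * h_right + (N - p - q - 1) * (2 * d - q) * h_left

lemma mul_productCoeff {d N p q : ℕ} (hN : N ≤ d) (hpq : p + q < N) :
    (p + 1) * (q + 1) * (d - p) * (d - q) * productCoeff k d N p q =
      (N - p - q) * d * (d * (2 * p + 2 * q + 3 - N) - p * (p + 1) - q * (q + 1)) *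
        (2 * d - 2 * p - 1) * (2 * d - 2 * q - 1) * seriesCoeff k d N p q := by
  have h_both := mul_seriesCoeff_succ_succ (k := k) hN hpq
  have h_left : (d - p - 1) * ((p + 1) * (d - p) * (2 * d - 1 + q - N - p) *
      seriesCoeff k d N (p + 1) q) = -((d - p - 1) * ((N - p - q) * (2 * d - p) *
        (2 * d + p - N - q) * seriesCoeff k d N p q)) := by
    rcases Nat.lt_or_ge (p + 1) d with hp | hp
    · rw [mul_seriesCoeff_succ_left hN hpq hp, mul_neg]
    · rw [show d = p + 1 by omega]
      push_cast
      ring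
  have h_right : (d - q - 1) * ((q + 1) * (d - q) * (2 * d - 1 + p - N - q) *
      seriesCoeff k d N p (q + 1)) = (d - q - 1) * ((N - p - q) * (2 * d - q) *
        (2 * d + q - N - p) * seriesCoeff k d N p q) := by
    rcases Nat.lt_or_ge (q + 1) d with hq | hq
    · rw [mul_seriesCoeff_succ_right hN hpq hq]
    · rw [show d = q + 1 by omega]
      push_cast
      ring
  rw [productCoeff]
  linear_combination (d - p - 1) * (d - q - 1) * h_both - (q + 1) * (d - q) * h_left +
    (p + 1) * (d - p) * h_right

/-- The scalar factor in the definition of `transvectant`. -/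
noncomputable def transvectantScale (k : Type*) [Field k] (m n q : ℕ) : k :=
  (m - q).factorial * (n - q).factorial / (m.factorial * n.factorial)

lemma falling_sub_eq_div {a p n m : ℕ} (h : p + n + m = a) :
    falling (a - p : k) n = (a - p).factorial / m.factorial := by
  have h_ne : (m.factorial : k) ≠ 0 := Nat.cast_ne_zero.2 m.factorial_ne_zero
  rw [← Nat.cast_sub (by omega), falling_natCast, eq_div_iff h_ne, ← Nat.cast_mul, mul_comm,
    show m = a - p - n by omega, Nat.factorial_mul_descFactorial (by omega)]

lemma seriesCoeff_eq_factorial {d N p q m t : ℕ} (hN : p + q + m + 1 = N) (hd : N + t = d) :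
    seriesCoeff k d N p q =
      (-1) ^ p * (N.factorial / (p.factorial * q.factorial * (m + 1).factorial)) *
      ((d - p).factorial * (d - q).factorial / t.factorial ^ 2) *
      ((2 * q + m + 2 * t).factorial * (2 * p + m + 2 * t).factorial /
        ((2 * d - p).factorial * (2 * d - q).factorial)) := by
  have h_choose : (N.choose (p + q) * (p + q).choose p : k) =
      N.factorial / (p.factorial * q.factorial * (m + 1).factorial) := by
    rw [Nat.cast_choose k (by omega), Nat.cast_choose k (by omega),
      show N - (p + q) = m + 1 by omega, Nat.add_sub_cancel_left]
    have h_ne : ((p + q).factorial : k) ≠ 0 := Nat.cast_ne_zero.2 (p + q).factorial_ne_zero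
    field_simp
  have h_den_left := falling_sub_eq_div (k := k) (a := 2 * d) (p := p) (n := N + 1 - q)
    (m := 2 * q + m + 2 * t) (by omega)
  have h_den_right := falling_sub_eq_div (k := k) (a := 2 * d) (p := q) (n := N + 1 - p)
    (m := 2 * p + m + 2 * t) (by omega)
  rw [Nat.cast_mul, Nat.cast_ofNat] at h_den_left h_den_right
  rw [seriesCoeff, h_choose, h_den_left, h_den_right,
    falling_sub_eq_div (m := t) (by omega), falling_sub_eq_div (m := t) (by omega)]
  simp only [div_eq_mul_inv, mul_inv, inv_inv]
  ring

lemma natCast_factorial_eq_mul {R : Type*} [Semiring R] {m n : ℕ} (h : m + 1 = n) :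
    (n.factorial : R) = n * m.factorial := by
  rw [← h, Nat.factorial_succ, Nat.cast_mul]

lemma productCoeff_eq_factorial {d N p q m t : ℕ} (hN : p + q + m + 1 = N)
    (hd : N + t = d) :
    productCoeff k d N p q =
      (-1) ^ p * (d * (d * (2 * p + 2 * q + 3 - N) - p * (p + 1) - q * (q + 1))) *
      (N.factorial / ((p + 1).factorial * (q + 1).factorial * m.factorial)) *
      ((d - (p + 1)).factorial * (d - (q + 1)).factorial / t.factorial ^ 2) *
      ((2 * d - 2 * p - 1) * (2 * q + m + 2 * t).factorial *
        ((2 * d - 2 * q - 1) * (2 * p + m + 2 * t).factorial) /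
        ((2 * d - p).factorial * (2 * d - q).factorial)) := by
  have h_fact (n : ℕ) : (n.factorial : k) ≠ 0 := Nat.cast_ne_zero.2 n.factorial_ne_zero
  have h_succ (n : ℕ) : (n + 1 : k) ≠ 0 := Nat.cast_add_one_ne_zero n
  have h_sub {n : ℕ} (h : n < d) : (d - n : k) ≠ 0 := sub_ne_zero.2 (Nat.cast_injective.ne h.ne')
  have h_p := h_sub (show p < d by omega)
  have h_q := h_sub (show q < d by omega)
  have h_closed := mul_productCoeff (k := k) (by omega : N ≤ d) (by omega : p + q < N)
  have h_l : (N - p - q : k) = m + 1 := by rw [← hN]; push_cast; ring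
  rw [seriesCoeff_eq_factorial hN hd, h_l,
    natCast_factorial_eq_mul (show m + 1 = m + 1 from rfl),
    natCast_factorial_eq_mul (show d - (p + 1) + 1 = d - p by omega),
    natCast_factorial_eq_mul (show d - (q + 1) + 1 = d - q by omega),
    Nat.cast_sub (by omega : p ≤ d), Nat.cast_sub (by omega : q ≤ d)] at h_closed
  rw [natCast_factorial_eq_mul (show p + 1 = p + 1 from rfl),
    natCast_factorial_eq_mul (show q + 1 = q + 1 from rfl)]
  push_cast at h_closed ⊢
  refine mul_left_cancel₀ (mul_ne_zero (mul_ne_zero (mul_ne_zero (h_succ p) (h_succ q)) h_p) h_q)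
    (h_closed.trans ?_)
  field_simp [h_fact, h_succ]

lemma transvectantScale_mul_productCoeff {d N p q m : ℕ} (hN : p + q + m + 1 = N)
    (hNd : N ≤ d) :
    transvectantScale k d d 1 * transvectantScale k d d N * productCoeff k d N p q =
      (-1) ^ p * (d * (2 * p + 2 * q + 3 - N) - p * (p + 1) - q * (q + 1)) *
        (d.factorial * (d - 1).factorial * N.factorial *
          (2 * d - 2 * p - 1).factorial * (2 * d - 2 * q - 1).factorial /
        ((p + 1).factorial * (q + 1).factorial * (d - (p + 1)).factorial *
          (d - (q + 1)).factorial * (2 * d - p).factorial * (2 * d - q).factorial *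
          m.factorial)) *
        (transvectantScale k (2 * d - 2 * (p + 1)) (2 * d - 2 * (q + 1)) m *
          (transvectantScale k d d (p + 1) * transvectantScale k d d (q + 1))) := by
  obtain ⟨t, ht⟩ := Nat.exists_eq_add_of_le hNd
  have h_fact (n : ℕ) : (n.factorial : k) ≠ 0 := Nat.cast_ne_zero.2 n.factorial_ne_zero
  have h_d : (d : k) ≠ 0 := Nat.cast_ne_zero.2 (by omega)
  have h_cast {n : ℕ} (h : n < d) : ((2 * d - 2 * n - 1 : ℕ) : k) = 2 * d - 2 * n - 1 := by
    rw [Nat.cast_sub (by omega), Nat.cast_sub (by omega)]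
    push_cast
    rfl
  rw [productCoeff_eq_factorial hN ht.symm]
  simp only [transvectantScale]
  rw [show d - N = t by omega, show 2 * d - 2 * (p + 1) - m = 2 * q + m + 2 * t by omega,
    show 2 * d - 2 * (q + 1) - m = 2 * p + m + 2 * t by omega,
    natCast_factorial_eq_mul (show d - 1 + 1 = d by omega),
    natCast_factorial_eq_mul (show 2 * d - 2 * (p + 1) + 1 = 2 * d - 2 * p - 1 by omega),
    natCast_factorial_eq_mul (show 2 * d - 2 * (q + 1) + 1 = 2 * d - 2 * q - 1 by omega),
    h_cast (by omega), h_cast (by omega)]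
  field_simp [h_fact]

end Coefficients

/-! ### The syzygy -/

section Syzygy

variable {k : Type*} [Field k]

lemma sum_range_two_mul_one_sub_neg_one_pow_smul {M : Type*} [AddCommGroup M] [Module k M] (r : ℕ)
    (f : ℕ → M) :
    ∑ p ∈ range (2 * r), (1 - (-1 : k) ^ (p + 1)) • f p =
      (2 : k) • ∑ i ∈ Icc 1 r, f (2 * i - 2) := by
  induction r with
  | zero => simp
  | succ r ih =>
    rw [mul_add_one, sum_range_succ, sum_range_succ, ih, sum_Icc_succ_top (by omega),
      (even_two_mul r).add_one.neg_one_pow, ((even_two_mul r).add_one.add_one).neg_one_pow,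
      show 2 * (r + 1) - 2 = 2 * r by omega]
    module

variable [CharZero k]

lemma transvectantScale_mul_productCoeff_eq_N1_div_N2 {d r i j : ℕ} (hrd : 2 * r ≤ d + 1)
    (hi : 1 ≤ i) (hj : 1 ≤ j) (hij : i + j ≤ r + 1) :
    transvectantScale k d d 1 * transvectantScale k d d (2 * r - 1) *
        productCoeff k d (2 * r - 1) (2 * i - 2) (2 * j - 2) =
      ((2 * (N1 d r i j / N2 d r i j) : ℚ) : k) *
        (transvectantScale k (2 * d + 2 - 4 * i) (2 * d + 2 - 4 * j) (2 * (r + 1 - i - j)) *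
          (transvectantScale k d d (2 * i - 1) * transvectantScale k d d (2 * j - 1))) := by
  obtain ⟨i, rfl⟩ := Nat.exists_eq_add_of_le' hi
  obtain ⟨j, rfl⟩ := Nat.exists_eq_add_of_le' hj
  have h_i : 2 * (i + 1) - 2 = 2 * i := by omega
  have h_j : 2 * (j + 1) - 2 = 2 * j := by omega
  have h_r : ((2 * r - 1 : ℕ) : k) = 2 * r - 1 := by
    rw [Nat.cast_sub (by omega)]
    push_cast
    rfl
  obtain ⟨m, hm⟩ : ∃ m, 2 * (r + 1 - (i + 1) - (j + 1)) = m := ⟨_, rfl⟩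
  rw [h_i, h_j, hm, transvectantScale_mul_productCoeff (m := m) (by omega) (by omega),
    (even_two_mul i).neg_one_pow, h_r, N1, N2]
  push_cast
  rw [show 2 * (i + 1) - 1 = 2 * i + 1 by omega, show 2 * (j + 1) - 1 = 2 * j + 1 by omega,
    show 2 * d + 2 - 4 * (i + 1) = 2 * d - 2 * (2 * i + 1) by omega,
    show 2 * d + 2 - 4 * (j + 1) = 2 * d - 2 * (2 * j + 1) by omega,
    show 2 * d + 3 - 4 * (i + 1) = 2 * d - 2 * (2 * i) - 1 by omega,
    show 2 * d + 3 - 4 * (j + 1) = 2 * d - 2 * (2 * j) - 1 by omega,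
    show d + 1 - 2 * (i + 1) = d - (2 * i + 1) by omega,
    show d + 1 - 2 * (j + 1) = d - (2 * j + 1) by omega,
    show 2 * d + 2 - 2 * (i + 1) = 2 * d - 2 * i by omega,
    show 2 * d + 2 - 2 * (j + 1) = 2 * d - 2 * j by omega,
    show 2 * r + 2 - 2 * (i + 1) - 2 * (j + 1) = m by omega]
  ring

lemma transvectant_eq_smul_cayleyOmega (m n q : ℕ) (F G : MvPolynomial (Fin 2) k) :
    transvectant m n q F G = transvectantScale k m n q • Ω q F G := by
  rw [transvectant, cayleyOmega_eq_sum, transvectantScale, smul_eq_C_mul]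
  push_cast
  rfl

lemma transvectant_swap (m n q : ℕ) (F G : MvPolynomial (Fin 2) k) :
    transvectant n m q G F = (-1 : k) ^ q • transvectant m n q F G := by
  rw [transvectant_eq_smul_cayleyOmega, transvectant_eq_smul_cayleyOmega, cayleyOmega_swap,
    transvectantScale, transvectantScale, mul_comm ((n - q).factorial : k),
    mul_comm (n.factorial : k), smul_comm]

lemma transvectant_zero (m n : ℕ) (F G : MvPolynomial (Fin 2) k) :
    transvectant m n 0 F G = F * G := by
  rw [transvectant_eq_smul_cayleyOmega, transvectantScale, cayleyOmega_zero, Nat.sub_zero,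
    Nat.sub_zero, div_self, one_smul]
  exact_mod_cast mul_ne_zero m.factorial_ne_zero n.factorial_ne_zero

/-- The covariant `(𝒞_{2i-1}, 𝒞_{2j-1})_{2(r-i-j+1)}` of weight `2r` of the pair `(A, B)` of forms
of order `d`, where `𝒞_q = (A, B)_q`. -/
noncomputable def quadraticCovariant (d r : ℕ) (A B : MvPolynomial (Fin 2) k) (i j : ℕ) :
    MvPolynomial (Fin 2) k :=
  transvectant (2 * d + 2 - 4 * i) (2 * d + 2 - 4 * j) (2 * (r + 1 - i - j))
    (transvectant d d (2 * i - 1) A B) (transvectant d d (2 * j - 1) A B)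

lemma quadraticCovariant_swap (d r : ℕ) (A B : MvPolynomial (Fin 2) k) (i j : ℕ) :
    quadraticCovariant d r A B j i = quadraticCovariant d r A B i j := by
  rw [quadraticCovariant, transvectant_swap, (even_two_mul _).neg_one_pow, one_smul,
    Nat.sub_right_comm, quadraticCovariant]

lemma quadraticCovariant_one_self (d r : ℕ) (A B : MvPolynomial (Fin 2) k) :
    quadraticCovariant d r A B 1 r = transvectant d d 1 A B * transvectant d d (2 * r - 1) A B := by
  rw [quadraticCovariant, show r + 1 - 1 - r = 0 by omega, mul_zero, transvectant_zero]

lemma quadraticCovariant_eq_smul_cayleyOmega (d r : ℕ) (A B : MvPolynomial (Fin 2) k) (i j : ℕ) :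
    quadraticCovariant d r A B i j =
      (transvectantScale k (2 * d + 2 - 4 * i) (2 * d + 2 - 4 * j) (2 * (r + 1 - i - j)) *
          (transvectantScale k d d (2 * i - 1) * transvectantScale k d d (2 * j - 1))) •
        Ω (2 * (r + 1 - i - j)) (Ω (2 * i - 1) A B)
          (Ω (2 * j - 1) A B) := by
  simp only [quadraticCovariant, transvectant_eq_smul_cayleyOmega, map_smul, LinearMap.smul_apply,
    smul_smul]
  ring_nf

lemma cayleyOmega_one_mul_cayleyOmega_eq_sum {d r : ℕ} (hr : 1 ≤ r) (hrd : 2 * r ≤ d + 1)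
    {A B : MvPolynomial (Fin 2) k} (hA : A.IsHomogeneous d) (hB : B.IsHomogeneous d) :
    Ω 1 A B * Ω (2 * r - 1) A B =
      (2 : k) • ∑ p ∈ Icc 1 r ×ˢ Icc 1 r,
        productCoeff k d (2 * r - 1) (2 * p.1 - 2) (2 * p.2 - 2) •
          Ω (2 * (r + 1 - p.1 - p.2)) (Ω (2 * p.1 - 1) A B)
            (Ω (2 * p.2 - 1) A B) := by
  have h_product := two_smul_cayleyOmega_one_mul_cayleyOmega (k := k) (N := 2 * r - 1)
    ⟨r - 1, by omega⟩ (by omega) hA hB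
  rw [productSeries_eq_sum d _ (by simp) (by simp), show 2 * r - 1 + 1 = 2 * r by omega]
    at h_product
  refine smul_right_injective _ (two_ne_zero (α := k)) (h_product.trans ?_)
  let F (p q : ℕ) := productCoeff k d (2 * r - 1) p q •
    Ω (2 * r - (p + 1) - (q + 1)) (Ω (p + 1) A B) (Ω (q + 1) A B)
  calc
    _ = ∑ p ∈ range (2 * r), (1 - (-1 : k) ^ (p + 1)) •
          ∑ q ∈ range (2 * r), (1 - (-1 : k) ^ (q + 1)) • F p q := by
      simp only [smul_sum, F]
      exact sum_congr rfl fun p _ => sum_congr rfl fun q _ => by rw [smul_comm, mul_smul]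
    _ = (2 : k) • (2 : k) • ∑ p ∈ Icc 1 r ×ˢ Icc 1 r, F (2 * p.1 - 2) (2 * p.2 - 2) := by
      simp only [sum_range_two_mul_one_sub_neg_one_pow_smul, ← smul_sum, sum_product]
    _ = _ := by
      refine congrArg _ (congrArg _ (sum_congr rfl fun p hp => ?_))
      obtain ⟨⟨hi, -⟩, ⟨hj, -⟩⟩ : (1 ≤ p.1 ∧ p.1 ≤ r) ∧ 1 ≤ p.2 ∧ p.2 ≤ r := by
        simpa only [mem_product, mem_Icc] using hp
      simp only [F]
      rw [show 2 * p.1 - 2 + 1 = 2 * p.1 - 1 by omega, show 2 * p.2 - 2 + 1 = 2 * p.2 - 1 by omega,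
        show 2 * r - (2 * p.1 - 1) - (2 * p.2 - 1) = 2 * (r + 1 - p.1 - p.2) by omega]

theorem transvectant_one_mul_transvectant {d r : ℕ} (hr : 1 ≤ r) (hrd : 2 * r ≤ d + 1)
    {A B : MvPolynomial (Fin 2) k} (hA : A.IsHomogeneous d) (hB : B.IsHomogeneous d) :
    transvectant d d 1 A B * transvectant d d (2 * r - 1) A B =
      ∑ p ∈ Icc 1 r ×ˢ Icc 1 r with p.1 + p.2 ≤ r + 1,
        ((4 * (N1 d r p.1 p.2 / N2 d r p.1 p.2) : ℚ) : k) •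
          quadraticCovariant d r A B p.1 p.2 := by
  rw [transvectant_eq_smul_cayleyOmega, transvectant_eq_smul_cayleyOmega, smul_mul_smul_comm,
    cayleyOmega_one_mul_cayleyOmega_eq_sum hr hrd hA hB, smul_comm, smul_sum, smul_sum, sum_filter]
  refine sum_congr rfl fun p hp => ?_
  obtain ⟨⟨hi, -⟩, ⟨hj, -⟩⟩ : (1 ≤ p.1 ∧ p.1 ≤ r) ∧ 1 ≤ p.2 ∧ p.2 ≤ r := by
    simpa only [mem_product, mem_Icc] using hp
  split_ifs with h
  · rw [quadraticCovariant_eq_smul_cayleyOmega, smul_smul, smul_smul, smul_smul]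
    congr 1
    have h_coeff := transvectantScale_mul_productCoeff_eq_N1_div_N2 (k := k) hrd hi hj h
    push_cast at h_coeff ⊢
    linear_combination 2 * h_coeff
  · rw [productCoeff_eq_zero_of_lt d (by omega), zero_smul, smul_zero, smul_zero]

lemma sum_ite_eq_one_two_smul_of_swap {ι M : Type*} [LinearOrder ι] [AddCommMonoid M]
    {s : Finset (ι × ι)} {f : ι × ι → M} (hs : ∀ p ∈ s, p.swap ∈ s) (hf : ∀ p, f p.swap = f p) :
    ∑ p ∈ s with p.1 ≤ p.2, (if p.1 = p.2 then 1 else 2) • f p = ∑ p ∈ s, f p := by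
  have h_lower : ∑ p ∈ s with ¬p.1 ≤ p.2, f p =
        ∑ p ∈ s with p.1 ≤ p.2, if p.1 ≠ p.2 then f p else 0 := by
    rw [← sum_filter]
    refine sum_nbij' Prod.swap Prod.swap (fun p hp => ?_) (fun p hp => ?_) (fun _ _ => rfl)
      (fun _ _ => rfl) (fun p _ => (hf p).symm)
    all_goals
      simp only [mem_filter, not_le, Prod.fst_swap, Prod.snd_swap] at hp ⊢
    · exact ⟨⟨hs p hp.1, hp.2.le⟩, hp.2.ne⟩
    · exact ⟨hs p hp.1.1, hp.1.2.lt_of_ne hp.2⟩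
  rw [← sum_filter_add_sum_filter_not s (fun p => p.1 ≤ p.2) f, h_lower,
    ← sum_add_distrib]
  refine sum_congr rfl fun p _ => ?_
  split_ifs <;> simp_all [two_smul]

lemma theta_swap (d r i j : ℕ) : theta d r j i = theta d r i j := by
  rw [theta, theta, N1, N1, N2, N2, Nat.sub_right_comm (2 * r + 2)]
  push_cast
  ring

lemma cast_alpha (d r i j : ℕ) :
    (alpha d r i j : k) = ((if i = j then 1 else 2 : ℕ) : k) * (theta d r i j : k) := by
  rw [alpha]
  push_cast [apply_ite (Rat.cast : ℚ → k)]
  rfl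

lemma cast_theta (d r i j : ℕ) :
    (theta d r i j : k) =
      ((if i = 1 then 1 else 0) * (if j = r then 1 else 0) +
        (if i = r then 1 else 0) * (if j = 1 then 1 else 0)) -
      2 * ((4 * (N1 d r i j / N2 d r i j) : ℚ) : k) := by
  rw [theta]
  push_cast [apply_ite (Rat.cast : ℚ → k)]
  ring

lemma sum_delta_smul_quadraticCovariant {d r : ℕ} (hr : 1 ≤ r) (A B : MvPolynomial (Fin 2) k) :
    ∑ p ∈ Icc 1 r ×ˢ Icc 1 r with p.1 + p.2 ≤ r + 1,
        ((if p.1 = 1 then 1 else 0) * (if p.2 = r then 1 else 0) +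
          (if p.1 = r then 1 else 0) * (if p.2 = 1 then 1 else 0) : k) •
            quadraticCovariant d r A B p.1 p.2 =
      (2 : k) • (transvectant d d 1 A B * transvectant d d (2 * r - 1) A B) := by
  have h_one : (1, r) ∈ (Icc 1 r ×ˢ Icc 1 r).filter fun p => p.1 + p.2 ≤ r + 1 := by
    simp only [mem_filter, mem_product, mem_Icc]
    omega
  have h_self : (r, 1) ∈ (Icc 1 r ×ˢ Icc 1 r).filter fun p => p.1 + p.2 ≤ r + 1 := by
    simp only [mem_filter, mem_product, mem_Icc]
    omega
  simp only [add_smul, sum_add_distrib, ← ite_and, mul_ite, mul_one, mul_zero, ite_smul, one_smul,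
    zero_smul]
  rw [sum_eq_single_of_mem _ h_one, sum_eq_single_of_mem _ h_self]
  · rw [if_pos ⟨rfl, rfl⟩, if_pos ⟨rfl, rfl⟩, quadraticCovariant_swap d r A B 1 r,
      quadraticCovariant_one_self, two_smul]
  · exact fun p _ hp => if_neg fun h => hp (Prod.ext_iff.2 h.symm)
  · exact fun p _ hp => if_neg fun h => hp (Prod.ext_iff.2 h.symm)

end Syzygy

end QuadraticSyzygy

open QuadraticSyzygy

/-- Main theorem: the explicit quadratic syzygy of weight `2r` among the linear
combinants `𝒞_{2i−1} = (A,B)_{2i−1}` of a pencil of binary `d`-ics: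
`Σ α_{i,j} (𝒞_{2i−1}, 𝒞_{2j−1})_{2(r−i−j+1)} = 0`, the sum over pairs `(i,j)` with
`1 ≤ i ≤ j ≤ r` and `i+j ≤ r+1`. -/
theorem main_quadratic_syzygy {k : Type*} [Field k] [CharZero k]
    (d r : ℕ) (hr : 3 ≤ r) (hrd : 2 * r ≤ d + 1)
    (A B : MvPolynomial (Fin 2) k)
    (hA : A.IsHomogeneous d) (hB : B.IsHomogeneous d) :
    ∑ p ∈ (Finset.Icc 1 r ×ˢ Finset.Icc 1 r).filter
        (fun p => p.1 ≤ p.2 ∧ p.1 + p.2 ≤ r + 1),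
      C ((alpha d r p.1 p.2 : ℚ) : k) *
        transvectant (2 * d + 2 - 4 * p.1) (2 * d + 2 - 4 * p.2)
          (2 * (r + 1 - p.1 - p.2))
          (transvectant d d (2 * p.1 - 1) A B)
          (transvectant d d (2 * p.2 - 1) A B) = 0 := by
  calc
    _ = ∑ p ∈ ((Icc 1 r ×ˢ Icc 1 r).filter fun p => p.1 + p.2 ≤ r + 1) with p.1 ≤ p.2,
          (if p.1 = p.2 then 1 else 2) • (theta d r p.1 p.2 : k) •
            quadraticCovariant d r A B p.1 p.2 := by
      simp only [filter_filter, and_comm, ← smul_eq_C_mul, cast_alpha, mul_smul,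
        Nat.cast_smul_eq_nsmul]
      rfl
    _ = ∑ p ∈ Icc 1 r ×ˢ Icc 1 r with p.1 + p.2 ≤ r + 1,
          (theta d r p.1 p.2 : k) • quadraticCovariant d r A B p.1 p.2 :=
      sum_ite_eq_one_two_smul_of_swap
        (fun p => by simp only [mem_filter, mem_product]; grind)
        (fun p => by rw [Prod.fst_swap, Prod.snd_swap, theta_swap, quadraticCovariant_swap])
    _ = 0 := by
      simp only [cast_theta, sub_smul, sum_sub_distrib]
      rw [sum_delta_smul_quadraticCovariant (by omega),
        transvectant_one_mul_transvectant (by omega) hrd hA hB, smul_sum]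
      simp only [mul_smul, sub_self]
end

section
/- Positivity of the leading syzygy coefficient. Let d, r be integers with 3 ≤ r ≤ (d+1)/2. With N₁(i,j) = (2di + 2dj − dr − 2i² − 2j² − 2d + 3i + 3j − 2) · d!·(d−1)!·(2r−1)!·(2d−4i+3)!·(2d−4j+3)!, N₂(i,j) = (2i−1)!·(2j−1)!·(d−2i+1)!·(d−2j+1)!·(2d−2i+2)!·(2d−2j+2)!·(2r−2i−2j+2)!, and θ_{1,r} = 1 − 8·N₁(1,r)/N₂(1,r), the coefficient α_{1,r} = 2·θ_{1,r} is strictly positive. -/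
section

open scoped Nat

/-- The number `1 - θ_{1,r} = 8·N₁(1,r)/N₂(1,r)` after cancellation. The parameters
`p = r - 1` and `m = d + 1 - 2r` range over all of `ℕ`, which avoids truncated subtraction. -/
def leadingRatio (p m : ℕ) : ℚ :=
  4 * ((p + 1) * m + 2 * p + 1) * ((2 * p + m)! * (2 * m + 1)!) / (m ! * (2 * p + 2 * m + 2)!)

lemma leadingRatio_pos (p m : ℕ) : 0 < leadingRatio p m := by
  unfold leadingRatio
  positivity

lemma leadingRatio_one (m : ℕ) : leadingRatio 1 m = 1 := by
  have h_num : (2 * 1 + m)! = (m + 2) * ((m + 1) * m !) := by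
    rw [show 2 * 1 + m = m + 2 by ring, Nat.factorial_succ, Nat.factorial_succ]
  have h_den : (2 * 1 + 2 * m + 2)! =
      (2 * m + 4) * ((2 * m + 3) * ((2 * m + 2) * (2 * m + 1)!)) := by
    rw [show 2 * 1 + 2 * m + 2 = 2 * m + 4 by ring, Nat.factorial_succ, Nat.factorial_succ,
      Nat.factorial_succ]
  rw [leadingRatio, h_num, h_den]
  push_cast
  field_simp
  ring

lemma leadingRatio_succ (p m : ℕ) :
    leadingRatio (p + 1) m = leadingRatio p m *
      (((p + 2) * m + 2 * p + 3) * (2 * p + m + 1) * (2 * p + m + 2) /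
        (((p + 1) * m + 2 * p + 1) * (2 * p + 2 * m + 3) * (2 * p + 2 * m + 4))) := by
  have h_num : (2 * (p + 1) + m)! =
      (2 * p + m + 2) * ((2 * p + m + 1) * (2 * p + m)!) := by
    rw [show 2 * (p + 1) + m = 2 * p + m + 2 by ring, Nat.factorial_succ, Nat.factorial_succ]
  have h_den : (2 * (p + 1) + 2 * m + 2)! =
      (2 * p + 2 * m + 4) * ((2 * p + 2 * m + 3) * (2 * p + 2 * m + 2)!) := by
    rw [show 2 * (p + 1) + 2 * m + 2 = 2 * p + 2 * m + 4 by ring, Nat.factorial_succ,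
      Nat.factorial_succ]
  rw [leadingRatio, leadingRatio, h_num, h_den]
  push_cast
  field_simp
  ring

lemma leadingRatio_strictAnti (m : ℕ) : StrictAnti fun p => leadingRatio p m := by
  refine strictAnti_nat_of_succ_lt fun p => ?_
  rw [leadingRatio_succ]
  refine mul_lt_of_lt_one_right (leadingRatio_pos p m) ((div_lt_one (by positivity)).2 ?_)
  -- The difference of the two sides is a polynomial in `p` and `m` with nonnegative coefficients.
  rw [← sub_pos]
  ring_nf
  positivity

lemma N1_one_self (p m : ℕ) :
    N1 (2 * p + 1 + m) (p + 1) 1 (p + 1) =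
      ((p + 1) * m + 2 * p + 1) *
        ((2 * p + 1 + m) * (2 * p + m)! * (2 * p + m)! *
          (2 * p + 1)! * (4 * p + 2 * m + 1)! * (2 * m + 1)!) := by
  rw [N1, show 2 * p + 1 + m - 1 = 2 * p + m by lia,
    show 2 * (p + 1) - 1 = 2 * p + 1 by lia,
    show 2 * (2 * p + 1 + m) + 3 - 4 * 1 = 4 * p + 2 * m + 1 by lia,
    show 2 * (2 * p + 1 + m) + 3 - 4 * (p + 1) = 2 * m + 1 by lia,
    show 2 * p + 1 + m = 2 * p + m + 1 by ring, Nat.factorial_succ (2 * p + m)]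
  push_cast
  ring

lemma N2_one_self (p m : ℕ) :
    N2 (2 * p + 1 + m) (p + 1) 1 (p + 1) =
      (2 * p + 1)! * (2 * p + m)! * m ! *
        (2 * (2 * p + 1 + m) * (4 * p + 2 * m + 1)!) *
        (2 * p + 2 * m + 2)! := by
  rw [N2, show 2 * 1 - 1 = 1 by rfl,
    show 2 * (p + 1) - 1 = 2 * p + 1 by lia,
    show 2 * p + 1 + m + 1 - 2 * 1 = 2 * p + m by lia,
    show 2 * p + 1 + m + 1 - 2 * (p + 1) = m by lia,
    show 2 * (2 * p + 1 + m) + 2 - 2 * 1 = 4 * p + 2 * m + 1 + 1 by lia,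
    show 2 * (2 * p + 1 + m) + 2 - 2 * (p + 1) = 2 * p + 2 * m + 2 by lia,
    show 2 * (p + 1) + 2 - 2 * 1 - 2 * (p + 1) = 0 by lia,
    Nat.factorial_succ (4 * p + 2 * m + 1), Nat.factorial_one, Nat.factorial_zero]
  push_cast
  ring

lemma eight_mul_N1_div_N2_one_self (p m : ℕ) :
    8 * N1 (2 * p + 1 + m) (p + 1) 1 (p + 1) / N2 (2 * p + 1 + m) (p + 1) 1 (p + 1) =
      leadingRatio p m := by
  rw [N1_one_self, N2_one_self, leadingRatio]
  field_simp
  ring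

end

/-- Positivity of the leading syzygy coefficient:
`α_{1,r} = 2·θ_{1,r} = 2·(1 − 8·N₁(1,r)/N₂(1,r)) > 0` for `3 ≤ r ≤ (d+1)/2`. -/
theorem alpha_one_r_pos (d r : ℕ) (hr : 3 ≤ r) (hrd : 2 * r ≤ d + 1) :
    0 < 2 * (1 - 8 * N1 d r 1 r / N2 d r 1 r) := by
  obtain ⟨p, rfl⟩ := Nat.exists_eq_add_of_le' (show 1 ≤ r by lia)
  obtain ⟨m, rfl⟩ := Nat.exists_eq_add_of_le (show 2 * p + 1 ≤ d by lia)
  have h_lt : leadingRatio p m < 1 :=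
    calc leadingRatio p m < leadingRatio 1 m := leadingRatio_strictAnti m (by lia)
      _ = 1 := leadingRatio_one m
  rw [eight_mul_N1_div_N2_one_self]
  exact mul_pos two_pos (sub_pos.2 h_lt)
end

section
/- For all integers d, r with r ≥ 3 and d ≥ 2r−1, the inequality 4·(d·r − 2r² + 3r − 1) · ((d−1)!·(2d−4r+3)!) / ((d−2r+1)!·(2d−2r+2)!) < 1 holds (as an inequality of rational numbers). -/
/-!
Put `n = d - 2r + 1` and `s = r - 1`. Then `dr - 2r² + 3r - 1 = (n + 2)s + n + 1`, and for fixed `n`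
the left side of the inequality is strictly decreasing in `s`: its successive quotients are less
than `1` because
`((n + 2)s + n + 1)(2n + 2s + 3) - ((n + 2)(s + 1) + n + 1)(n + 2s + 1) = n(n + 2)s ≥ 0`
and `n + 2s + 2 < 2n + 2s + 4`. At `s = 1`, that is `r = 2`, its value is exactly `1`.
-/

open scoped Nat

/-- The factor `dr - 2r² + 3r - 1` for `d = n + 2s + 1` and `r = s + 1`, written so that no
subtraction occurs. -/
def linearFactor (n s : ℕ) : ℕ := (n + 2) * s + n + 1

/-- The left side of the inequality for `d = n + 2s + 1` and `r = s + 1`; these parameters run over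
all `1 ≤ r` and `2r - 1 ≤ d`. -/
def factorialQuotient (n s : ℕ) : ℚ :=
  4 * linearFactor n s * ((n + 2 * s)! * (2 * n + 1)!) / (n ! * (2 * n + 2 * s + 2)!)

lemma linearFactor_pos (n s : ℕ) : 0 < linearFactor n s := Nat.succ_pos _

lemma linearFactor_succ_mul_le (n s : ℕ) :
    linearFactor n (s + 1) * (n + 2 * s + 1) ≤ linearFactor n s * (2 * n + 2 * s + 3) :=
  calc linearFactor n (s + 1) * (n + 2 * s + 1)
    _ ≤ linearFactor n (s + 1) * (n + 2 * s + 1) + n * (n + 2) * s := Nat.le_add_right _ _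
    _ = linearFactor n s * (2 * n + 2 * s + 3) := by unfold linearFactor; ring

lemma factorialQuotient_pos (n s : ℕ) : 0 < factorialQuotient n s := by
  have := linearFactor_pos n s
  unfold factorialQuotient
  positivity

lemma factorialQuotient_one (n : ℕ) : factorialQuotient n 1 = 1 := by
  simp only [factorialQuotient, linearFactor, mul_one, Nat.factorial_succ]
  push_cast
  field_simp
  ring

lemma factorialQuotient_succ (n s : ℕ) :
    factorialQuotient n (s + 1) = factorialQuotient n s *
      ((linearFactor n (s + 1) * (n + 2 * s + 1) * (n + 2 * s + 2) : ℕ) /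
        (linearFactor n s * (2 * n + 2 * s + 3) * (2 * n + 2 * s + 4) : ℕ)) := by
  have := linearFactor_pos n s
  simp only [factorialQuotient, mul_add_one, ← add_assoc, Nat.factorial_succ,
    show 2 * n + 2 * s + 2 + 2 = 2 * n + 2 * s + 2 + 1 + 1 by rfl]
  push_cast
  field_simp
  ring

lemma factorialQuotient_strictAnti (n : ℕ) : StrictAnti (factorialQuotient n) := by
  refine strictAnti_nat_of_succ_lt fun s ↦ ?_
  have growth : linearFactor n (s + 1) * (n + 2 * s + 1) * (n + 2 * s + 2) <
      linearFactor n s * (2 * n + 2 * s + 3) * (2 * n + 2 * s + 4) :=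
    Nat.mul_lt_mul_of_le_of_lt (linearFactor_succ_mul_le n s) (by lia)
      (Nat.mul_pos (linearFactor_pos n s) (by lia))
  rw [factorialQuotient_succ]
  exact mul_lt_of_lt_one_right (factorialQuotient_pos n s)
    ((div_lt_one (mod_cast growth.pos)).2 (mod_cast growth))

/-- For all integers `r ≥ 3` and `d ≥ 2r−1`,
`4·(dr − 2r² + 3r − 1)·((d−1)!·(2d−4r+3)!)/((d−2r+1)!·(2d−2r+2)!) < 1`. -/
theorem elementary_inequality (d r : ℕ) (hr : 3 ≤ r) (hd : 2 * r - 1 ≤ d) :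
    4 * ((d : ℚ) * r - 2 * r ^ 2 + 3 * r - 1) *
        (((d - 1).factorial * (2 * d + 3 - 4 * r).factorial : ℕ) : ℚ) /
        (((d + 1 - 2 * r).factorial * (2 * d + 2 - 2 * r).factorial : ℕ) : ℚ) < 1 := by
  obtain ⟨s, rfl⟩ : ∃ s, r = s + 1 := ⟨r - 1, by lia⟩
  obtain ⟨n, rfl⟩ : ∃ n, d = n + 2 * s + 1 := ⟨d - (2 * s + 1), by lia⟩
  have lt_one : factorialQuotient n s < 1 :=
    factorialQuotient_one n ▸ factorialQuotient_strictAnti n (by lia : 1 < s)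
  convert lt_one using 1
  rw [factorialQuotient, linearFactor,
    show n + 2 * s + 1 - 1 = n + 2 * s by lia,
    show 2 * (n + 2 * s + 1) + 3 - 4 * (s + 1) = 2 * n + 1 by lia,
    show n + 2 * s + 1 + 1 - 2 * (s + 1) = n by lia,
    show 2 * (n + 2 * s + 1) + 2 - 2 * (s + 1) = 2 * n + 2 * s + 2 by lia]
  push_cast
  ring
end

section
/- Define Γ(r,d) = 4·(d·r − 2r² + 3r − 1) · ((d−1)!·(2d−4r+3)!) / ((d−2r+1)!·(2d−2r+2)!) as a rational number, for integers r ≥ 3 and d ≥ 2r−1. Then Γ(r, d+1) < Γ(r, d), i.e., Γ(r, ·) is strictly decreasing in d on the range d ≥ 2r−1. -/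
/-!
In the coordinates `r = n + 1`, `d = 2r - 1 + m` the truncated subtractions in `Γ` disappear, and
cancelling factorials makes `Γ(r,d+1) / Γ(r,d)` a quotient of cubics in `m`. Denominator minus
numerator is `n(n-1)(2n+1)(m+2) = (r-1)(r-2)(2r-1)(d+3-2r)`: it vanishes at `r = 1` and `r = 2`,
where `Γ(r,·)` is constant, and is positive for `r ≥ 3`.
-/

/-- `Γ(r,d) = 4·(dr − 2r² + 3r − 1)·((d−1)!·(2d−4r+3)!)/((d−2r+1)!·(2d−2r+2)!)`. -/
noncomputable def Gamma (r d : ℕ) : ℚ :=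
  4 * ((d : ℚ) * r - 2 * r ^ 2 + 3 * r - 1) *
      (((d - 1).factorial * (2 * d + 3 - 4 * r).factorial : ℕ) : ℚ) /
      (((d + 1 - 2 * r).factorial * (2 * d + 2 - 2 * r).factorial : ℕ) : ℚ)

open scoped Nat

lemma Gamma_eq_div (n m : ℕ) :
    Gamma (n + 1) (2 * n + 1 + m) =
      4 * ((n + 1) * m + 2 * n + 1) * ((2 * n + m)! * (2 * m + 1)!) /
        (m ! * (2 * n + 2 * m + 2)!) := by
  have hnum : 2 * (2 * n + 1 + m) + 3 - 4 * (n + 1) = 2 * m + 1 := by lia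
  have hden : 2 * (2 * n + 1 + m) + 2 - 2 * (n + 1) = 2 * n + 2 * m + 2 := by lia
  rw [Gamma, hnum, hden, show 2 * n + 1 + m - 1 = 2 * n + m by lia,
    show 2 * n + 1 + m + 1 - 2 * (n + 1) = m by lia]
  push_cast
  ring

lemma Gamma_pos (n m : ℕ) : 0 < Gamma (n + 1) (2 * n + 1 + m) := by
  rw [Gamma_eq_div]
  positivity

lemma Gamma_succ_eq_mul (n m : ℕ) :
    Gamma (n + 1) (2 * n + 1 + m + 1) =
      Gamma (n + 1) (2 * n + 1 + m) *
        (((n + 1) * (m + 1) + 2 * n + 1) * (2 * n + m + 1) * (2 * m + 3) /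
          (((n + 1) * m + 2 * n + 1) * (2 * n + 2 * m + 3) * (n + m + 2))) := by
  rw [add_assoc _ m 1, Gamma_eq_div, Gamma_eq_div, ← add_assoc (2 * n) m 1,
    show 2 * (m + 1) + 1 = 2 * m + 1 + 1 + 1 by ring,
    show 2 * n + 2 * (m + 1) + 2 = 2 * n + 2 * m + 2 + 1 + 1 by ring]
  simp only [Nat.factorial_succ]
  push_cast
  field_simp
  ring

lemma Gamma_sub_Gamma_succ (n m : ℕ) :
    Gamma (n + 1) (2 * n + 1 + m) - Gamma (n + 1) (2 * n + 1 + m + 1) =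
      Gamma (n + 1) (2 * n + 1 + m) *
        (n * (n - 1) * (2 * n + 1) * (m + 2) /
          (((n + 1) * m + 2 * n + 1) * (2 * n + 2 * m + 3) * (n + m + 2))) := by
  rw [Gamma_succ_eq_mul]
  field_simp
  ring

/-- `Γ(r, ·)` is strictly decreasing in `d` on the range `d ≥ 2r−1`, for `r ≥ 3`. -/
theorem Gamma_strict_anti (r d : ℕ) (hr : 3 ≤ r) (hd : 2 * r - 1 ≤ d) :
    Gamma r (d + 1) < Gamma r d := by
  obtain ⟨n, rfl⟩ : ∃ n, r = n + 1 := ⟨r - 1, by lia⟩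
  obtain ⟨m, rfl⟩ : ∃ m, d = 2 * n + 1 + m := Nat.exists_eq_add_of_le (by lia)
  have hn : 0 < n := by lia
  have hn_sub : (0 : ℚ) < n - 1 := sub_pos.2 (by exact_mod_cast (by lia : 1 < n))
  rw [← sub_pos, Gamma_sub_Gamma_succ]
  exact mul_pos (Gamma_pos n m) (by positivity)
end

section
/- Wronskian criterion for membership in a pencil. Let d ≥ 2 and let A, B be linearly independent binary forms of order d over a field of characteristic zero. A binary form F of order d belongs to the span of {A, B} if and only if the 3×3 determinant W with rows (∂²A/∂x₁², ∂²A/∂x₁∂x₂, ∂²A/∂x₂²), (∂²B/∂x₁², ∂²B/∂x₁∂x₂, ∂²B/∂x₂²), (∂²F/∂x₁², ∂²F/∂x₁∂x₂, ∂²F/∂x₂²) is the zero polynomial. -/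
open MvPolynomial

/-!
Let `F₁, …, Fₙ` be binary forms of order `d ≥ n - 1` and let `M` be the matrix of their partial
derivatives of order `n - 1`. A relation `∑ cᵢ ∂^α Fᵢ = 0` with polynomial coefficients that holds
for all `α` of order `n - 1` descends to all lower orders by Euler's identity. So if `det M = 0`,
then `det (∂₀^j Fᵢ) = 0`, and setting the second variable to `1` gives the vanishing of the
classical Wronskian of the univariate polynomials `fᵢ(t) = Fᵢ(t, 1)`.

In characteristic zero this forces the `fᵢ`, hence the `Fᵢ`, to be linearly dependent. Indeed, let
`∑ cᵢ fᵢ^(j) = 0` for all `j < n` with `c_p ≠ 0`. Differentiating and eliminating `c_p`, one gets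
`∑ w(c_p, cᵢ) fᵢ^(j) = 0` for all `j < n - 1`, where `w(a, b) = a b' - a' b`. This relation does not
involve `f_p`, so by induction either the remaining `fᵢ` are dependent or all `w(c_p, cᵢ)` vanish;
in the latter case every `cᵢ` is a constant multiple of `c_p`.
-/

section Wronskian

open scoped Matrix Polynomial
open Polynomial (derivative wronskian)

theorem exists_eq_smul_of_wronskian_eq_zero {k : Type*} [Field k] [CharZero k] {p q : k[X]}
    (hp : p ≠ 0) (h : wronskian p q = 0) : ∃ c : k, q = c • p := by
  classical
  obtain ⟨p', q', hp', hq', hunit⟩ := extract_gcd p q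
  have hcoprime : IsCoprime p' q' := (gcd_isUnit_iff p' q').1 hunit
  set g := gcd p q
  have hg : g ≠ 0 := fun hg => hp (by rw [hp', hg, zero_mul])
  have hw : wronskian p' q' = 0 := by
    have hscale : wronskian p q = g ^ 2 * wronskian p' q' := by
      rw [hp', hq']
      simp only [wronskian, Polynomial.derivative_mul]
      ring
    exact (mul_eq_zero.1 (hscale.symm.trans h)).resolve_left (pow_ne_zero 2 hg)
  obtain ⟨hdp, hdq⟩ := hcoprime.wronskian_eq_zero_iff.1 hw
  obtain ⟨a, ha⟩ : ∃ a, p' = Polynomial.C a := ⟨_, Polynomial.eq_C_of_derivative_eq_zero hdp⟩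
  obtain ⟨b, hb⟩ : ∃ b, q' = Polynomial.C b := ⟨_, Polynomial.eq_C_of_derivative_eq_zero hdq⟩
  have ha0 : a ≠ 0 := by
    rintro rfl
    exact hp (by rw [hp', ha, Polynomial.C_0, mul_zero])
  refine ⟨b / a, ?_⟩
  rw [hp', hq', ha, hb, Polynomial.smul_eq_C_mul, mul_left_comm, ← Polynomial.C_mul,
    div_mul_cancel₀ b ha0]

theorem sum_wronskian_mul_eq_zero {R ι : Type*} [CommRing R] [Fintype ι] {c f : ι → R[X]}
    (h : ∑ i, c i * f i = 0) (h' : ∑ i, c i * derivative (f i) = 0) (a : R[X]) :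
    ∑ i, wronskian a (c i) * f i = 0 := by
  have hderiv : ∑ i, derivative (c i) * f i = 0 := by
    have := congrArg derivative h
    simpa only [Polynomial.derivative_sum, Polynomial.derivative_mul, Finset.sum_add_distrib, h',
      add_zero, map_zero] using this
  calc ∑ i, wronskian a (c i) * f i
      = a * ∑ i, derivative (c i) * f i - derivative a * ∑ i, c i * f i := by
        simp only [wronskian, sub_mul, mul_assoc, Finset.sum_sub_distrib, Finset.mul_sum]
    _ = 0 := by rw [hderiv, h, mul_zero, mul_zero, sub_zero]

/-- The classical Wronskian matrix of a family of univariate polynomials: one row for each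
polynomial, one column for each order of differentiation. -/
noncomputable def wronskianMatrix {R : Type*} [Semiring R] {n : ℕ} (f : Fin n → R[X]) :
    Matrix (Fin n) (Fin n) R[X] :=
  .of fun i j => derivative^[j] (f i)

theorem det_wronskianMatrix_ne_zero {k : Type*} [Field k] [CharZero k] {n : ℕ}
    {f : Fin n → k[X]} (hf : LinearIndependent k f) : (wronskianMatrix f).det ≠ 0 := by
  induction n with
  | zero => simp
  | succ n ih =>
    intro hdet
    obtain ⟨c, hc, hcf⟩ := Matrix.exists_vecMul_eq_zero_iff.2 hdet
    obtain ⟨p, hp : c p ≠ 0⟩ := Function.ne_iff.1 hc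
    have hrel (j : ℕ) (hj : j < n + 1) : ∑ i, c i * derivative^[j] (f i) = 0 :=
      congrFun hcf ⟨j, hj⟩
    have hminor : (fun i => wronskian (c p) (c (p.succAbove i))) ᵥ*
        wronskianMatrix (f ∘ p.succAbove) = 0 := by
      funext j
      have hsum := sum_wronskian_mul_eq_zero (hrel j (by lia))
        (by simpa only [Function.iterate_succ_apply'] using hrel (j + 1) (by lia)) (c p)
      rwa [Fin.sum_univ_succAbove _ p, Polynomial.wronskian_self_eq_zero, zero_mul, zero_add]
        at hsum
    have hw := Matrix.eq_zero_of_vecMul_eq_zero (ih (hf.comp _ p.succAbove_right_injective)) hminor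
    have hprop (i : Fin (n + 1)) : ∃ a : k, c i = a • c p := by
      refine exists_eq_smul_of_wronskian_eq_zero hp ?_
      cases i using p.succAboveCases with
      | x => exact Polynomial.wronskian_self_eq_zero _
      | p i => exact congrFun hw i
    choose a ha using hprop
    have hzero : c p * ∑ i, a i • f i = 0 := by
      rw [← hrel 0 n.succ_pos, Finset.mul_sum]
      refine Finset.sum_congr rfl fun i _ => ?_
      rw [ha i, mul_smul_comm, smul_mul_assoc, Function.iterate_zero_apply]
    have hap : a p = 0 :=
      Fintype.linearIndependent_iff.1 hf a ((mul_eq_zero.1 hzero).resolve_left hp) p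
    exact hp (by rw [ha p, hap, zero_smul])

end Wronskian

theorem linearIndependent_of_det_apply_ne_zero {k R V ι : Type*} [CommRing k] [CommRing R]
    [IsDomain R] [Algebra k R] [FaithfulSMul k R] [AddCommGroup V] [Module k V] [Fintype ι]
    [DecidableEq ι] {v : ι → V} (L : ι → V →ₗ[k] R) (h : (Matrix.of fun i j => L j (v i)).det ≠ 0) :
    LinearIndependent k v :=
  .of_comp (LinearMap.pi L)
    ((Matrix.linearIndependent_rows_of_det_ne_zero h).restrict_scalars
      (by simpa only [← Algebra.algebraMap_eq_smul_one] using
        FaithfulSMul.algebraMap_injective k R))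

section PartialDerivatives

variable {R σ : Type*}

theorem commute_pderiv [CommRing R] (i j : σ) :
    Function.Commute (pderiv (R := R) i) (pderiv j) := by
  classical
  have hbracket : ⁅pderiv (R := R) i, pderiv (R := R) j⁆ = 0 := by
    refine derivation_ext fun s => ?_
    simp [Derivation.commutator_apply, pderiv_X, Pi.single_apply, apply_ite]
  intro p
  exact sub_eq_zero.1 (by rw [← Derivation.commutator_apply, hbracket, Derivation.zero_apply])

theorem isHomogeneous_iterate_pderiv_s11 [CommSemiring R] {p : MvPolynomial σ R} {d : ℕ}
    (hp : p.IsHomogeneous d) (i : σ) (a : ℕ) : ((pderiv i)^[a] p).IsHomogeneous (d - a) := by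
  induction a with
  | zero => exact hp
  | succ a ih => simpa only [Function.iterate_succ_apply', Nat.sub_add_eq] using ih.pderiv

theorem sum_mul_eq_zero_of_sum_mul_pderiv_eq_zero {ι : Type*} [CommSemiring R] [IsAddTorsionFree R]
    [Finite σ] [Fintype ι] {d : ℕ} (hd : d ≠ 0) {c G : ι → MvPolynomial σ R}
    (hG : ∀ i, (G i).IsHomogeneous d) (h : ∀ s, ∑ i, c i * pderiv s (G i) = 0) :
    ∑ i, c i * G i = 0 := by
  have := Fintype.ofFinite σ
  have hEuler : d • ∑ i, c i * G i = 0 :=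
    calc d • ∑ i, c i * G i = ∑ i, ∑ s, X s * (c i * pderiv s (G i)) := by
          simp only [Finset.smul_sum, ← mul_smul_comm, ← (hG _).sum_X_mul_pderiv, Finset.mul_sum,
            mul_left_comm]
      _ = ∑ s, X s * ∑ i, c i * pderiv s (G i) := by
          rw [Finset.sum_comm]
          simp only [Finset.mul_sum]
      _ = 0 := by simp only [h, mul_zero, Finset.sum_const_zero]
  exact (smul_eq_zero.1 hEuler).resolve_left hd

end PartialDerivatives

section BinaryForms

open scoped Matrix

variable {n d : ℕ}

/-- The matrix of the partial derivatives of order `n - 1` of `n` bivariate polynomials: one row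
for each polynomial, with the columns ordered as `∂₀^(n-1), ∂₀^(n-2) ∂₁, …, ∂₁^(n-1)`. -/
noncomputable def partialDerivMatrix {R : Type*} [CommSemiring R]
    (F : Fin n → MvPolynomial (Fin 2) R) : Matrix (Fin n) (Fin n) (MvPolynomial (Fin 2) R) :=
  .of fun i j => (pderiv 0)^[j.rev] ((pderiv 1)^[j] (F i))

theorem partialDerivMatrix_fin_three {R : Type*} [CommSemiring R]
    (F : Fin 3 → MvPolynomial (Fin 2) R) :
    partialDerivMatrix F =
      !![pderiv 0 (pderiv 0 (F 0)), pderiv 0 (pderiv 1 (F 0)), pderiv 1 (pderiv 1 (F 0));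
         pderiv 0 (pderiv 0 (F 1)), pderiv 0 (pderiv 1 (F 1)), pderiv 1 (pderiv 1 (F 1));
         pderiv 0 (pderiv 0 (F 2)), pderiv 0 (pderiv 1 (F 2)), pderiv 1 (pderiv 1 (F 2))] := by
  ext1 i j
  fin_cases i <;> fin_cases j <;> rfl

theorem sum_mul_iterate_pderiv_eq_zero_of_vecMul_eq_zero {R : Type*} [CommRing R]
    [IsAddTorsionFree R] {F c : Fin n → MvPolynomial (Fin 2) R} (hn : n ≤ d + 1)
    (hF : ∀ i, (F i).IsHomogeneous d)
    (hc : c ᵥ* partialDerivMatrix F = 0) {a b : ℕ} (hab : a + b < n) :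
    ∑ i, c i * (pderiv 0)^[a] ((pderiv 1)^[b] (F i)) = 0 := by
  obtain ⟨m, hm⟩ := Nat.exists_eq_add_of_lt hab
  induction m generalizing a b with
  | zero =>
    have hcol := congrFun hc ⟨b, by lia⟩
    have hrev : n - (b + 1) = a := by lia
    simpa only [partialDerivMatrix, Matrix.vecMul, dotProduct, Matrix.of_apply, Fin.val_rev, hrev,
      Pi.zero_apply] using hcol
  | succ m ih =>
    have hhom (i : Fin n) :
        ((pderiv 0)^[a] ((pderiv 1)^[b] (F i))).IsHomogeneous (d - b - a) :=
      isHomogeneous_iterate_pderiv_s11 (isHomogeneous_iterate_pderiv_s11 (hF i) 1 b) 0 a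
    refine sum_mul_eq_zero_of_sum_mul_pderiv_eq_zero (by lia) hhom (Fin.forall_fin_two.2 ⟨?_, ?_⟩)
    · simpa only [Function.iterate_succ_apply'] using ih (a := a + 1) (b := b) (by lia) (by lia)
    · have hcomm := (commute_pderiv (R := R) (1 : Fin 2) 0).iterate_right a
      simpa only [hcomm _, Function.iterate_succ_apply']
        using ih (a := a) (b := b + 1) (by lia) (by lia)

/-- The dehomogenization `F(x₀, x₁) ↦ F(t, 1)`, which `Polynomial.homogenize` inverts on forms of
a given order. -/
noncomputable def dehomogenize {R : Type*} [CommSemiring R] :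
    MvPolynomial (Fin 2) R →ₐ[R] Polynomial R :=
  aeval ![Polynomial.X, 1]

theorem dehomogenize_pderiv_zero {R : Type*} [CommSemiring R] (p : MvPolynomial (Fin 2) R) :
    dehomogenize (pderiv 0 p) = (dehomogenize p).derivative := by
  induction p using MvPolynomial.induction_on with
  | C a => simp [dehomogenize]
  | add p q hp hq => simp only [map_add, hp, hq]
  | mul_X p i hp =>
    simp only [pderiv_mul, map_add, map_mul, hp, Polynomial.derivative_mul]
    fin_cases i <;> simp [dehomogenize, pderiv_X]

theorem linearIndependent_dehomogenize {R ι : Type*} [CommSemiring R]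
    {F : ι → MvPolynomial (Fin 2) R} (hF : ∀ i, (F i).IsHomogeneous d)
    (hind : LinearIndependent R F) : LinearIndependent R (dehomogenize ∘ F) := by
  have hsection : Polynomial.homogenizeLM d ∘ dehomogenize ∘ F = F :=
    funext fun i => Polynomial.homogenize_eq_of_isHomogeneous (hF i) rfl
  exact .of_comp (Polynomial.homogenizeLM d) (hsection.symm ▸ hind)

theorem dehomogenize_det_iterate_pderiv_zero {R : Type*} [CommRing R]
    (F : Fin n → MvPolynomial (Fin 2) R) :
    dehomogenize (Matrix.of fun i j : Fin n => (pderiv 0)^[j] (F i)).det =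
      (wronskianMatrix (dehomogenize ∘ F)).det := by
  rw [AlgHom.map_det]
  congr 1
  ext1 i j
  exact Function.Semiconj.iterate_right (f := dehomogenize) dehomogenize_pderiv_zero j (F i)

theorem linearIndependent_iff_det_partialDerivMatrix_ne_zero {k : Type*} [Field k] [CharZero k]
    {F : Fin n → MvPolynomial (Fin 2) k} (hn : n ≤ d + 1) (hF : ∀ i, (F i).IsHomogeneous d) :
    LinearIndependent k F ↔ (partialDerivMatrix F).det ≠ 0 := by
  constructor
  · intro hind hdet
    obtain ⟨c, hc, hcF⟩ := Matrix.exists_vecMul_eq_zero_iff.2 hdet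
    have hdet₀ : (Matrix.of fun i j : Fin n => (pderiv 0)^[j] (F i)).det = 0 :=
      Matrix.exists_vecMul_eq_zero_iff.1 ⟨c, hc, funext fun j =>
        sum_mul_iterate_pderiv_eq_zero_of_vecMul_eq_zero hn hF hcF (b := 0) j.isLt⟩
    refine det_wronskianMatrix_ne_zero (linearIndependent_dehomogenize hF hind) ?_
    rw [← dehomogenize_det_iterate_pderiv_zero, hdet₀, map_zero]
  · intro hdet
    refine linearIndependent_of_det_apply_ne_zero (fun j : Fin n =>
      ((pderiv 0).toLinearMap ^ (j.rev : ℕ)) ∘ₗ ((pderiv 1).toLinearMap ^ (j : ℕ))) ?_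
    simpa only [LinearMap.comp_apply, Module.End.pow_apply, Derivation.coeFn_coe] using! hdet

end BinaryForms

theorem wronskian_pencil_criterion_general {k : Type*} [Field k] [CharZero k] {n d : ℕ}
    (hn : n ≤ d) {A : Fin n → MvPolynomial (Fin 2) k} {F : MvPolynomial (Fin 2) k}
    (hA : ∀ i, (A i).IsHomogeneous d) (hF : F.IsHomogeneous d) (hind : LinearIndependent k A) :
    F ∈ Submodule.span k (Set.range A) ↔
      (partialDerivMatrix (Fin.snoc (α := fun _ => MvPolynomial (Fin 2) k) A F)).det = 0 := by
  have hAF (i : Fin (n + 1)) :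
      (Fin.snoc (α := fun _ => MvPolynomial (Fin 2) k) A F i).IsHomogeneous d := by
    cases i using Fin.lastCases with
    | last => simpa only [Fin.snoc_last] using hF
    | cast i => simpa only [Fin.snoc_castSucc] using hA i
  rw [← not_iff_not, ← ne_eq (Matrix.det _),
    ← linearIndependent_iff_det_partialDerivMatrix_ne_zero (by lia) hAF, linearIndependent_finSnoc]
  exact (and_iff_right hind).symm

/-- Wronskian criterion for membership in a pencil: for linearly independent binary
forms `A, B` of order `d ≥ 2`, a binary form `F` of order `d` lies in the span of
`{A, B}` iff the 3×3 Wronskian determinant of second partial derivatives vanishes. -/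
theorem wronskian_pencil_criterion {k : Type*} [Field k] [CharZero k]
    (d : ℕ) (hd : 2 ≤ d)
    (A B F : MvPolynomial (Fin 2) k)
    (hA : A.IsHomogeneous d) (hB : B.IsHomogeneous d) (hF : F.IsHomogeneous d)
    (hAB : LinearIndependent k ![A, B]) :
    F ∈ Submodule.span k ({A, B} : Set (MvPolynomial (Fin 2) k)) ↔
      Matrix.det
        !![pderiv (0 : Fin 2) (pderiv 0 A), pderiv 0 (pderiv 1 A), pderiv 1 (pderiv 1 A);
           pderiv 0 (pderiv 0 B), pderiv 0 (pderiv 1 B), pderiv 1 (pderiv 1 B);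
           pderiv 0 (pderiv 0 F), pderiv 0 (pderiv 1 F), pderiv 1 (pderiv 1 F)] = 0 := by
  rw [← Matrix.range_cons_cons_empty A B ![], wronskian_pencil_criterion_general hd
    (Fin.forall_fin_two.2 ⟨hA, hB⟩) hF hAB, partialDerivMatrix_fin_three]
  rfl
end

section
/- Base commutation identity for the Cayley Omega operator. Let 𝒢 be a polynomial in the four variables x₁, x₂, y₁, y₂ over a field of characteristic zero which is bihomogeneous of order p in (x₁,x₂) and order q in (y₁,y₂). Then Ω_{xy}((x y)·𝒢) = (p+q+2)·𝒢 + (x y)·Ω_{xy}𝒢, where Ω_{xy} = ∂²/∂x₁∂y₂ − ∂²/∂y₁∂x₂ and (x y) = x₁y₂ − y₁x₂. -/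
/-!
By the second-order Leibniz rule, `Ω((x y)·G)` is `Ω(x y)·G + (x y)·ΩG` plus the terms that
differentiate each factor once. Here `Ω(x y) = 2`, and since the partial derivatives of the bracket
are, up to sign, the complementary variables, the mixed terms add up to the Euler operator
`x₁ ∂/∂x₁ + x₂ ∂/∂x₂ + y₁ ∂/∂y₁ + y₂ ∂/∂y₂` applied to `G`, that is, to the total degree times `G`.
-/

open MvPolynomial

/-- The Cayley Omega operator `Ω_{xy} = ∂²/∂x₁∂y₂ − ∂²/∂y₁∂x₂`, where the four
variables are indexed as `x₁ = 0`, `x₂ = 1`, `y₁ = 2`, `y₂ = 3`. -/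
noncomputable def Omega {k : Type*} [CommRing k] (G : MvPolynomial (Fin 4) k) :
    MvPolynomial (Fin 4) k :=
  pderiv (0 : Fin 4) (pderiv 3 G) - pderiv 2 (pderiv 1 G)

/-- The bracket factor `(x y) = x₁y₂ − y₁x₂`. -/
noncomputable def bracket {k : Type*} [CommRing k] : MvPolynomial (Fin 4) k :=
  X 0 * X 3 - X 2 * X 1

/-- A polynomial in `x₁, x₂, y₁, y₂` is bihomogeneous of orders `(p,q)` if it is
homogeneous of degree `p` in `(x₁,x₂)` and of degree `q` in `(y₁,y₂)`. -/
def Bihomogeneous {k : Type*} [CommRing k] (G : MvPolynomial (Fin 4) k)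
    (p q : ℕ) : Prop :=
  G.IsWeightedHomogeneous ![1, 1, 0, 0] p ∧ G.IsWeightedHomogeneous ![0, 0, 1, 1] q

theorem isWeightedHomogeneous_add_weight {R σ M : Type*} [CommSemiring R] [AddCommMonoid M]
    {w₁ w₂ : σ → M} {φ : MvPolynomial σ R} {m n : M}
    (h₁ : φ.IsWeightedHomogeneous w₁ m) (h₂ : φ.IsWeightedHomogeneous w₂ n) :
    φ.IsWeightedHomogeneous (w₁ + w₂) (m + n) := by
  intro d hd
  rw [← h₁ hd, ← h₂ hd]
  simp only [Finsupp.weight_apply, Pi.add_apply, smul_add, Finsupp.sum_add]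

section CommRing

variable {k : Type*} [CommRing k]

theorem Bihomogeneous.isHomogeneous {G : MvPolynomial (Fin 4) k} {p q : ℕ}
    (hG : Bihomogeneous G p q) : G.IsHomogeneous (p + q) := by
  have weight_sum : (![1, 1, 0, 0] + ![0, 0, 1, 1] : Fin 4 → ℕ) = 1 := by decide
  rw [IsHomogeneous, ← weight_sum]
  exact isWeightedHomogeneous_add_weight hG.1 hG.2

theorem omega_mul (F G : MvPolynomial (Fin 4) k) :
    Omega (F * G) = Omega F * G
      + (pderiv 0 F * pderiv 3 G + pderiv 3 F * pderiv 0 G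
        - pderiv 2 F * pderiv 1 G - pderiv 1 F * pderiv 2 G)
      + F * Omega G := by
  simp only [Omega, pderiv_mul, map_add]
  ring

theorem pderiv_zero_bracket : pderiv 0 (bracket : MvPolynomial (Fin 4) k) = X 3 := by
  simp [bracket, pderiv_X]

theorem pderiv_one_bracket : pderiv 1 (bracket : MvPolynomial (Fin 4) k) = -X 2 := by
  simp [bracket, pderiv_X]

theorem pderiv_two_bracket : pderiv 2 (bracket : MvPolynomial (Fin 4) k) = -X 1 := by
  simp [bracket, pderiv_X]

theorem pderiv_three_bracket : pderiv 3 (bracket : MvPolynomial (Fin 4) k) = X 0 := by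
  simp [bracket, pderiv_X]

theorem omega_bracket : Omega (bracket : MvPolynomial (Fin 4) k) = 2 := by
  rw [Omega, pderiv_three_bracket, pderiv_one_bracket, map_neg, pderiv_X_self, pderiv_X_self]
  norm_num

theorem omega_bracket_mul (G : MvPolynomial (Fin 4) k) :
    Omega (bracket * G) = 2 * G + ∑ i, X i * pderiv i G + bracket * Omega G := by
  rw [omega_mul, omega_bracket, pderiv_zero_bracket, pderiv_one_bracket, pderiv_two_bracket,
    pderiv_three_bracket, Fin.sum_univ_four]
  ring

theorem omega_bracket_comm_general (G : MvPolynomial (Fin 4) k) (n : ℕ) (hG : G.IsHomogeneous n) :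
    Omega (bracket * G) = C ((n + 2 : ℕ) : k) * G + bracket * Omega G := by
  rw [omega_bracket_mul, hG.sum_X_mul_pderiv, nsmul_eq_mul, map_natCast]
  push_cast
  ring

end CommRing

/-- Base commutation identity for the Cayley Omega operator:
`Ω_{xy}((x y)·𝒢) = (p+q+2)·𝒢 + (x y)·Ω_{xy}𝒢` for `𝒢` bihomogeneous of orders `(p,q)`. -/
theorem omega_bracket_comm {k : Type*} [Field k] [CharZero k]
    (G : MvPolynomial (Fin 4) k) (p q : ℕ) (hG : Bihomogeneous G p q) :
    Omega (bracket * G) = C (((p + q + 2 : ℕ) : k)) * G + bracket * Omega G :=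
  omega_bracket_comm_general G (p + q) hG.isHomogeneous
end
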